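/- arXiv:0712.3104 — 10 statements merged into one kernel-verified Lean document; each statement's English description precedes it below -/
import Mathlib

section
/- Let β : G → H be a group homomorphism with kernel F, let g ∈ G and f ∈ F. Suppose y₁, …, y_t are elements of G and p₁, …, p_t are elements of F satisfying yᵢ⁻¹ * g * yᵢ = g * pᵢ for each i, and suppose that every element h of the centralizer of β(g) in H can be written as h = β(g)^k * β(yᵢ) for some integer k and some index i. Then g and g * f are conjugate in G if and only if there exist an index i and an element x ∈ F such that f = (g⁻¹ * x⁻¹ * g) * pᵢ * x. -/
/-- Algebraic core of the reduction of the conjugacy problem in `G` to twisted conjugacy in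
`F = ker β`: if `yᵢ⁻¹ g yᵢ = g pᵢ` with `pᵢ ∈ F`, and every element of the centralizer of
`β g` in `H` is of the form `(β g)^k * β (yᵢ)`, then `g` and `g * f` (with `f ∈ F`) are
conjugate in `G` iff `f = (g⁻¹ x⁻¹ g) pᵢ x` for some index `i` and some `x ∈ F`. -/
theorem conj_iff_twisted_conj_of_centralizer_cosets {G H : Type*} [Group G] [Group H]
    (β : G →* H) (g f : G) (hf : f ∈ β.ker) {t : ℕ} (y p : Fin t → G)
    (hp : ∀ i, p i ∈ β.ker)
    (hy : ∀ i, (y i)⁻¹ * g * y i = g * p i)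
    (hcent : ∀ h : H, h * β g = β g * h → ∃ (k : ℤ) (i : Fin t), h = (β g) ^ k * β (y i)) :
    (∃ z : G, z⁻¹ * g * z = g * f) ↔
      ∃ (i : Fin t) (x : G), x ∈ β.ker ∧ f = (g⁻¹ * x⁻¹ * g) * p i * x := by
  constructor
  · rintro ⟨z, hz⟩
    have hb : β z * β g = β g * β z := by
      have h := congrArg β hz
      rw [MonoidHom.mem_ker] at hf
      simp only [map_mul, map_inv, hf, mul_one] at h
      calc β z * β g = β z * ((β z)⁻¹ * β g * β z) := by rw [h]
        _ = β g * β z := by group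
    obtain ⟨k, i, hk⟩ := hcent _ hb
    refine ⟨i, (g ^ k * y i)⁻¹ * z, ?_, ?_⟩
    · rw [MonoidHom.mem_ker]
      simp [hk]
    · have hf' : f = g⁻¹ * (z⁻¹ * g * z) := by rw [hz]; group
      have hp' : p i = g⁻¹ * ((y i)⁻¹ * g * y i) := by rw [hy]; group
      have hc : g ^ k * g * (g ^ k)⁻¹ = g := by group
      calc f = g⁻¹ * (z⁻¹ * (g ^ k * g * (g ^ k)⁻¹) * z) := by rw [hc]; exact hf'
        _ = _ := by rw [hp']; group
  · rintro ⟨i, x, -, hx⟩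
    refine ⟨y i * x, ?_⟩
    calc (y i * x)⁻¹ * g * (y i * x) = x⁻¹ * ((y i)⁻¹ * g * y i) * x := by group
      _ = g * f := by rw [hy, hx]; group
end

section
/- Let F₂ be the free group on two generators a, b, and let σ be the automorphism of F₂ with σ(a) = a⁻¹ and σ(b) = b⁻¹. Then the subgroup of Aut(F₂) generated by the inner automorphisms Inn(F₂) together with σ is a normal subgroup of Aut(F₂). -/
namespace F2Aux

abbrev F := FreeGroup (Fin 2)
abbrev Lt := Fin 2 × Bool

def lcp : List Lt → List Lt → ℕ
  | [], _ => 0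
  | _ :: _, [] => 0
  | x :: xs, y :: ys => if x = y then lcp xs ys + 1 else 0

theorem lcp_comm : ∀ x y : List Lt, lcp x y = lcp y x
  | [], [] => rfl
  | [], _ :: _ => rfl
  | _ :: _, [] => rfl
  | x :: xs, y :: ys => by
    have := lcp_comm xs ys
    simp only [lcp, eq_comm (a := x) (b := y), this]

theorem lcp_hyp : ∀ x y z : List Lt, min (lcp x y) (lcp y z) ≤ lcp x z
  | [], _, _ => by simp [lcp]
  | _ :: _, [], _ => by simp [lcp]
  | _ :: _, _ :: _, [] => by simp [lcp]
  | x :: xs, y :: ys, z :: zs => by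
    have := lcp_hyp xs ys zs
    simp only [lcp]
    split_ifs <;> grind

theorem lcp_split : ∀ x y : List Lt, ∃ p x' y', x = p ++ x' ∧ y = p ++ y' ∧
    p.length = lcp x y ∧ (∀ a ∈ x'.head?, ∀ b ∈ y'.head?, a ≠ b)
  | [], y => ⟨[], [], y, by simp [lcp]⟩
  | x :: xs, [] => ⟨[], x :: xs, [], by simp [lcp]⟩
  | x :: xs, y :: ys => by
    by_cases h : x = y
    · obtain ⟨p, x', y', h1, h2, h3, h4⟩ := lcp_split xs ys
      refine ⟨x :: p, x', y', by simp [h1], by simp [h2, h], by simp [lcp, h, h3], h4⟩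
    · exact ⟨[], x :: xs, y :: ys, by simp [lcp, h]⟩

def g (x y : F) : ℕ := lcp x.toWord y.toWord

theorem g_comm (x y : F) : g x y = g y x := lcp_comm _ _
theorem g_hyp (x y z : F) : min (g x y) (g y z) ≤ g x z := lcp_hyp _ _ _

theorem norm_g (x y : F) : (x⁻¹ * y).norm + 2 * g x y = x.norm + y.norm := by
  obtain ⟨p, x', y', hx, hy, hp, hd⟩ := lcp_split x.toWord y.toWord
  have ex : x = FreeGroup.mk p * FreeGroup.mk x' := by
    rw [FreeGroup.mul_mk, ← hx, FreeGroup.mk_toWord]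
  have ey : y = FreeGroup.mk p * FreeGroup.mk y' := by
    rw [FreeGroup.mul_mk, ← hy, FreeGroup.mk_toWord]
  have rx : FreeGroup.IsReduced (p ++ x') := hx ▸ FreeGroup.isReduced_toWord
  have ry : FreeGroup.IsReduced (p ++ y') := hy ▸ FreeGroup.isReduced_toWord
  have e : x⁻¹ * y = FreeGroup.mk (FreeGroup.invRev x' ++ y') := by
    rw [← FreeGroup.mul_mk, ← FreeGroup.inv_mk, ex, ey]; group
  have red : FreeGroup.IsReduced (FreeGroup.invRev x' ++ y') := by
    have r1 : FreeGroup.IsReduced (FreeGroup.invRev x') := by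
      rw [FreeGroup.isReduced_iff_reduce_eq, FreeGroup.reduce_invRev,
        (rx.infix (List.suffix_append p x').isInfix).reduce_eq]
    have r2 : FreeGroup.IsReduced y' := ry.infix (List.suffix_append p y').isInfix
    refine List.isChain_append.2 ⟨r1, r2, ?_⟩
    intro a ha b hb hab
    rcases x' with _ | ⟨c, x'⟩
    · simp at ha
    · simp [FreeGroup.invRev] at ha
      have := hd c (by simp) b hb
      subst ha
      by_contra hne
      apply this
      ext1
      · exact hab
      · revert hne; simp
  have n1 : (x⁻¹ * y).norm = x'.length + y'.length := by
    rw [e, FreeGroup.norm, FreeGroup.toWord_mk, red.reduce_eq]; simp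
  have n2 : x.norm = p.length + x'.length := by rw [FreeGroup.norm, hx]; simp
  have n3 : y.norm = p.length + y'.length := by rw [FreeGroup.norm, hy]; simp
  have : g x y = p.length := hp.symm
  omega

theorem g_self_inv (u : F) (hu : u ≠ 1) : 2 * g u u⁻¹ < u.norm := by
  by_contra hlt
  have hpos : 0 < u.norm := by
    rw [Nat.pos_iff_ne_zero, Ne, FreeGroup.norm_eq_zero]; exact hu
  obtain ⟨p, x', y', hx, hy, hp, -⟩ := lcp_split u.toWord u⁻¹.toWord
  have hg : g u u⁻¹ = p.length := hp.symm
  have red : FreeGroup.IsReduced u.toWord := FreeGroup.isReduced_toWord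
  rw [FreeGroup.toWord_inv] at hy
  have hn : u.norm = u.toWord.length := rfl
  generalize u.toWord = U at *
  have key : ∀ i (h : i < p.length) (h2 : i < U.length),
      U[i] = ((U[U.length - 1 - i]).1, !(U[U.length - 1 - i]).2) := by
    intro i h h2
    have e1 : U[i] = p[i] := by
      simp only [hx]; rw [List.getElem_append_left h]
    have h3 : i < (FreeGroup.invRev U).length := by simpa using h2
    have e2 : (FreeGroup.invRev U)[i] = p[i] := by
      simp only [hy]; rw [List.getElem_append_left h]
    rw [e1, ← e2]
    simp [FreeGroup.invRev]
  have hc := List.isChain_iff_getElem.1 red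
  rcases Nat.even_or_odd' U.length with ⟨k, hk | hk⟩
  · have a := key (k - 1) (by omega) (by omega)
    have b := hc (k - 1) (by omega)
    have e : U.length - 1 - (k - 1) = k - 1 + 1 := by omega
    simp only [e] at a
    rw [a] at b
    simp at b
  · have a := key k (by omega) (by omega)
    have e : U.length - 1 - k = k := by omega
    simp only [e] at a
    have := congrArg Prod.snd a
    simp at this

theorem half (u v : F) (k : ℕ) (h1 : g u v = k) (h2 : g u⁻¹ v⁻¹ = k) (hu : u.norm = 2 * k)
    (hv : 2 * k ≤ v.norm) : ∃ p r s : F, u = p * s ∧ v = p * r * s ∧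
      (s * p).norm ≤ u.norm ∧ r.norm + u.norm ≤ v.norm := by
  obtain ⟨p, s, m, hU, hV, hp, -⟩ := lcp_split u.toWord v.toWord
  obtain ⟨q, s', m', hU', hV', hq, -⟩ := lcp_split u⁻¹.toWord v⁻¹.toWord
  have hp' : p.length = k := hp.trans h1
  have hq' : q.length = k := hq.trans h2
  rw [FreeGroup.toWord_inv] at hU' hV'
  have eU := congrArg FreeGroup.invRev hU'
  have eV := congrArg FreeGroup.invRev hV'
  rw [FreeGroup.invRev_invRev, FreeGroup.invRev_append] at eU eV
  have lU : u.toWord.length = 2 * k := hu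
  have lV : 2 * k ≤ v.toWord.length := hv
  have lU2 : p.length + s.length = 2 * k := by rw [← lU, hU]; simp
  have lV2 : p.length + m.length = v.toWord.length := by rw [hV]; simp
  have es : s = FreeGroup.invRev q := by
    refine (List.append_inj' (hU.symm.trans eU) ?_).2
    simp; omega
  have suf : FreeGroup.invRev q <:+ m := by
    refine List.suffix_of_suffix_length_le (l₃ := v.toWord) ?_ ?_ ?_
    · rw [eV]; exact List.suffix_append _ _
    · rw [hV]; exact List.suffix_append _ _
    · simp; omega
  obtain ⟨r, hr⟩ := suf
  rw [← es] at hr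
  have lm : r.length + s.length = m.length := by rw [← hr]; simp
  refine ⟨FreeGroup.mk p, FreeGroup.mk r, FreeGroup.mk s, ?_, ?_, ?_, ?_⟩
  · rw [FreeGroup.mul_mk, ← hU, FreeGroup.mk_toWord]
  · rw [FreeGroup.mul_mk, FreeGroup.mul_mk, List.append_assoc, hr, ← hV, FreeGroup.mk_toWord]
  · rw [FreeGroup.mul_mk]
    refine FreeGroup.norm_mk_le.trans ?_
    simp; omega
  · have : (FreeGroup.mk r).norm ≤ r.length := FreeGroup.norm_mk_le
    have : v.norm = v.toWord.length := rfl
    omega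

/-- `σ` acts on the pair as inversion, up to conjugation. -/
def P (σ : MulAut F) (u v : F) : Prop := ∃ w : F, σ u = w * u⁻¹ * w⁻¹ ∧ σ v = w * v⁻¹ * w⁻¹

def Gen (u v : F) : Prop := ∀ H : Subgroup F, u ∈ H → v ∈ H → H = ⊤

theorem P.swap {σ : MulAut F} {u v : F} : P σ u v → P σ v u := fun ⟨w, h1, h2⟩ => ⟨w, h2, h1⟩
theorem P.inv {σ : MulAut F} {u v : F} : P σ u v → P σ u⁻¹ v := fun ⟨w, h1, h2⟩ =>
  ⟨w, by rw [map_inv, h1]; group, h2⟩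
theorem P.mul {σ : MulAut F} {u v : F} : P σ u v → P σ (u * v) v := fun ⟨w, h1, h2⟩ =>
  ⟨w * v, by rw [map_mul, h1, h2]; group, by rw [h2]; group⟩
theorem P.conj {σ : MulAut F} {u v : F} (p : F) : P σ u v → P σ (p * u * p⁻¹) (p * v * p⁻¹) :=
  fun ⟨w, h1, h2⟩ => ⟨σ p * w * p⁻¹, by simp only [map_mul, map_inv, h1]; group,
    by simp only [map_mul, map_inv, h2]; group⟩

theorem Gen.swap {u v : F} (h : Gen u v) : Gen v u := fun H a b => h H b a
theorem Gen.inv {u v : F} (h : Gen u v) : Gen u⁻¹ v := fun H a b => h H (by simpa using a) b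
theorem Gen.mul {u v : F} (h : Gen u v) : Gen (u * v) v := fun H a b =>
  h H (by simpa using H.mul_mem a (H.inv_mem b)) b
theorem Gen.conj {u v : F} (h : Gen u v) (p : F) : Gen (p * u * p⁻¹) (p * v * p⁻¹) := by
  intro H a b
  have := h (H.comap (MulAut.conj p).toMonoidHom) (by simpa using a) (by simpa using b)
  rw [eq_top_iff]
  intro x _
  have hx : p⁻¹ * x * p ∈ H.comap (MulAut.conj p).toMonoidHom := by rw [this]; trivial
  simpa [mul_assoc] using hx

/-- `(x, y)` is obtained from `(u, v)` by inversions and a swap. -/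
def V (u v x y : F) : Prop :=
  ((x = u ∨ x = u⁻¹) ∧ (y = v ∨ y = v⁻¹)) ∨ ((x = v ∨ x = v⁻¹) ∧ (y = u ∨ y = u⁻¹))

theorem V.gen {u v x y : F} (h : V u v x y) (G : Gen u v) : Gen x y := by
  rcases h with ⟨rfl | rfl, rfl | rfl⟩ | ⟨rfl | rfl, rfl | rfl⟩
  · exact G
  · exact G.swap.inv.swap
  · exact G.inv
  · exact G.inv.swap.inv.swap
  · exact G.swap
  · exact G.inv.swap
  · exact G.swap.inv
  · exact G.inv.swap.inv

theorem V.symm {u v x y : F} (h : V u v x y) : V x y u v := by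
  rcases h with ⟨rfl | rfl, rfl | rfl⟩ | ⟨rfl | rfl, rfl | rfl⟩ <;> simp [V]

theorem V.P {σ : MulAut F} {u v x y : F} (h : V u v x y) (G : P σ x y) : P σ u v := by
  rcases h.symm with ⟨rfl | rfl, rfl | rfl⟩ | ⟨rfl | rfl, rfl | rfl⟩
  · exact G
  · exact G.swap.inv.swap
  · exact G.inv
  · exact G.inv.swap.inv.swap
  · exact G.swap
  · exact G.inv.swap
  · exact G.swap.inv
  · exact G.inv.swap.inv

theorem V.norm {u v x y : F} (h : V u v x y) : x.norm + y.norm = u.norm + v.norm := by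
  rcases h with ⟨rfl | rfl, rfl | rfl⟩ | ⟨rfl | rfl, rfl | rfl⟩ <;> simp [add_comm]

theorem V.two {u v y x z : F} (h : V u v y x) (h' : V u v y z) : z = x ∨ z = x⁻¹ := by
  have ii : ∀ t : F, t⁻¹⁻¹ = t := inv_inv
  rcases h with ⟨a | a, b | b⟩ | ⟨a | a, b | b⟩ <;>
  rcases h' with ⟨c | c, d | d⟩ | ⟨c | c, d | d⟩ <;> grind

inductive R (S : Set F) : F → F → Prop
  | base (z : F) : z ∈ S → R S z z
  | step (w y z : F) : R S w y → z ∈ S → z ≠ y⁻¹ → R S (w * z) z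

theorem R.mem {S : Set F} {w y : F} (h : R S w y) : y ∈ S := by cases h <;> assumption

theorem R.inv {S : Set F} (hi : ∀ x ∈ S, x⁻¹ ∈ S) (h1 : (1 : F) ∉ S)
    (N1 : ∀ x ∈ S, ∀ y ∈ S, x ≠ y → 2 * g x y ≤ x.norm)
    (N2 : ∀ x ∈ S, ∀ y ∈ S, ∀ z ∈ S, x ≠ y → z ≠ y⁻¹ → g x y + g y⁻¹ z < y.norm)
    {w y : F} (h : R S w y) :
    (∀ z ∈ S, z ≠ y⁻¹ → g y⁻¹ z < g w⁻¹ y⁻¹) ∧ y.norm ≤ w.norm ∧ (w = y ∨ 2 ≤ w.norm) := by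
  have pos : ∀ x ∈ S, 0 < x.norm := by
    intro x hx
    rcases Nat.eq_zero_or_pos x.norm with h | h
    · rw [FreeGroup.norm_eq_zero] at h
      exact absurd (h ▸ hx) h1
    · exact h
  induction h with
  | base y hy =>
    refine ⟨fun z hz hne => ?_, le_rfl, Or.inl rfl⟩
    have a := norm_g y⁻¹ y⁻¹
    have b := N1 _ (hi y hy) z hz hne.symm
    have c := pos y hy
    simp at a b
    omega
  | step w y z hw hz hne ih =>
    obtain ⟨i1, i2, -⟩ := ih
    have hy := hw.mem
    have c1 := i1 z hz hne
    have e1 := g_hyp w⁻¹ y⁻¹ z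
    have e2 := g_hyp y⁻¹ w⁻¹ z
    rw [g_comm y⁻¹ w⁻¹] at e2
    have e : g w⁻¹ z = g y⁻¹ z := by omega
    have f1 := norm_g w⁻¹ z
    have f2 := norm_g (w * z)⁻¹ z⁻¹
    have n1 := N1 _ (hi y hy) z hz hne.symm
    have n2 := N1 z hz _ (hi y hy) hne
    rw [g_comm] at n2
    have p1 := pos y hy
    have p2 := pos z hz
    simp only [inv_inv, mul_inv_cancel_right, FreeGroup.norm_inv_eq] at f1 f2 n1 n2
    refine ⟨fun t ht htn => ?_, by omega, Or.inr (by omega)⟩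
    have := N2 _ (hi y hy) z hz t ht hne.symm htn
    omega

theorem R.all {S : Set F} (hi : ∀ x ∈ S, x⁻¹ ∈ S) (w : F) (hw : w ∈ Subgroup.closure S) :
    w = 1 ∨ ∃ y, R S w y := by
  have key : ∀ x z : F, z ∈ S → (x = 1 ∨ ∃ y, R S x y) → (x * z = 1 ∨ ∃ y, R S (x * z) y) := by
    rintro x z hz (rfl | ⟨y, hy⟩)
    · exact Or.inr ⟨z, by simpa using R.base z hz⟩
    · by_cases e : z = y⁻¹
      · subst e
        cases hy with
        | base => left; simp
        | step w y' z hw hz hne => right; exact ⟨y', by simpa using hw⟩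
      · exact Or.inr ⟨z, R.step _ _ _ hy hz e⟩
  induction hw using Subgroup.closure_induction_right with
  | one => left; rfl
  | mul_right x hx z hz ih => exact key x z hz ih
  | mul_inv_cancel x hx z hz ih => exact key x z⁻¹ (hi z hz) ih

theorem not_cyclic (v : F) : ¬ Gen 1 v := by
  intro h
  have := h (Subgroup.zpowers v) (one_mem _) (Subgroup.mem_zpowers v)
  have ha : (FreeGroup.of 0 : F) ∈ Subgroup.zpowers v := by rw [this]; trivial
  have hb : (FreeGroup.of 1 : F) ∈ Subgroup.zpowers v := by rw [this]; trivial
  obtain ⟨m, hm⟩ := ha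
  obtain ⟨n, hn⟩ := hb
  have : (FreeGroup.of 0 : F) * FreeGroup.of 1 = FreeGroup.of 1 * FreeGroup.of 0 := by
    rw [← hm, ← hn]; exact ((Commute.refl v).zpow_zpow m n).eq
  revert this
  decide

theorem main (σ : MulAut F)
    (h0 : σ (FreeGroup.of 0) = (FreeGroup.of 0)⁻¹)
    (h1 : σ (FreeGroup.of 1) = (FreeGroup.of 1)⁻¹) (n : ℕ) :
    ∀ u v : F, u.norm + v.norm = n → Gen u v → P σ u v := by
  induction n using Nat.strong_induction_on with
  | _ n IH =>
  intro u v hn G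
  by_contra hP
  have M1 : ∀ x y, V u v x y → x.norm ≤ (x * y).norm := by
    intro x y h
    by_contra hlt
    have := h.norm
    have q := IH _ (by omega) (x * y) y rfl (h.gen G).mul
    have q2 := q.swap.inv.swap.mul.swap.inv.swap
    exact hP (h.P (by simpa using q2))
  have ne : ∀ x y, V u v x y → x ≠ 1 := by
    rintro x y h rfl
    exact not_cyclic y (h.gen G)
  have M2 : ∀ x y k, V u v x y → g x y = k → g x⁻¹ y⁻¹ = k → x.norm = 2 * k →
      2 * k ≤ y.norm → False := by
    intro x y k h a1 a2 a3 a4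
    obtain ⟨p, r, s, rfl, rfl, b1, b2⟩ := half x y k a1 a2 a3 a4
    have hx : 0 < (p * s).norm := by
      rw [Nat.pos_iff_ne_zero, Ne, FreeGroup.norm_eq_zero]; exact ne _ _ h
    have e := h.norm
    have G1 : Gen (r * (s * p)) (s * p) := by
      have := (h.gen G).swap.conj p⁻¹
      convert this using 1 <;> group
    have G2 : Gen r (s * p) := by
      have := G1.swap.inv.swap.mul.swap.inv.swap
      rwa [inv_inv, mul_inv_cancel_right] at this
    have q := (IH _ (by omega) r (s * p) rfl G2).mul.conj p
    refine hP (h.P ?_)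
    convert q.swap using 1 <;> group
  let S : Set F := {x | x = u ∨ x = u⁻¹ ∨ x = v ∨ x = v⁻¹}
  have hi : ∀ x ∈ S, x⁻¹ ∈ S := by
    rintro x (rfl | rfl | rfl | rfl) <;> simp [S]
  have hS : ∀ x ∈ S, ∀ y ∈ S, x = y ∨ y = x⁻¹ ∨ V u v x y := by
    rintro x (rfl | rfl | rfl | rfl) y (rfl | rfl | rfl | rfl) <;> simp [V]
  have hS1 : ∀ x ∈ S, x ≠ 1 := by
    rintro x (rfl | rfl | rfl | rfl)
    · exact ne _ v (by simp [V])
    · exact ne _ v (by simp [V])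
    · exact ne _ u (by simp [V])
    · exact ne _ u (by simp [V])
  have Vi : ∀ x y, V u v x y → V u v y x := by
    unfold V; tauto
  have Vj : ∀ x y, V u v x y → V u v x⁻¹ y := by
    rintro x y (⟨rfl | rfl, rfl | rfl⟩ | ⟨rfl | rfl, rfl | rfl⟩) <;> simp [V]
  have N0 : ∀ x y, V u v x y → 2 * g x y ≤ x.norm := by
    intro x y h
    have a := M1 y⁻¹ x (Vj _ _ (Vi _ _ h))
    have b := norm_g y x
    rw [g_comm] at b
    simp at a
    omega
  have N1 : ∀ x ∈ S, ∀ y ∈ S, x ≠ y → 2 * g x y ≤ x.norm := by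
    intro x hx y hy hne
    rcases hS x hx y hy with e | rfl | e
    · exact absurd e hne
    · exact (g_self_inv x (hS1 x hx)).le
    · exact N0 x y e
  have N2 : ∀ x ∈ S, ∀ y ∈ S, ∀ z ∈ S, x ≠ y → z ≠ y⁻¹ → g x y + g y⁻¹ z < y.norm := by
    intro x hx y hy z hz hxy hzy
    have n1 := N1 y hy x hx hxy.symm
    have n2 := N1 _ (hi y hy) z hz hzy.symm
    have n3 := g_self_inv y (hS1 y hy)
    rw [g_comm] at n1
    rw [FreeGroup.norm_inv_eq] at n2
    rcases hS y hy x hx with e | rfl | e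
    · exact absurd e.symm hxy
    · rw [g_comm] at n3; omega
    rcases hS y hy z hz with rfl | e' | e'
    · rw [g_comm] at n3; omega
    · exact absurd e' hzy
    by_contra hlt
    have t : z = x ∨ z = x⁻¹ := V.two e e'
    rcases t with rfl | rfl
    · have := g_hyp y z y⁻¹
      rw [g_comm y z, g_comm z y⁻¹] at this
      omega
    · have n4 := N0 x y (Vi _ _ e)
      exact M2 y x (g x y) e (g_comm _ _) (by omega) (by omega) (by omega)
  have top : Subgroup.closure S = ⊤ :=
    G _ (Subgroup.subset_closure (by simp [S])) (Subgroup.subset_closure (by simp [S]))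
  have mem : ∀ i : Fin 2, (FreeGroup.of i : F) ∈ S := by
    intro i
    rcases R.all hi (FreeGroup.of i) (by rw [top]; trivial) with h | ⟨y, hy⟩
    · exact absurd h (FreeGroup.of_ne_one i)
    · obtain ⟨-, -, e | e⟩ := hy.inv hi (fun h => hS1 1 h rfl) N1 N2
      · rw [e]; exact hy.mem
      · simp at e
  have hV : V u v (FreeGroup.of 0) (FreeGroup.of 1) := by
    rcases hS _ (mem 0) _ (mem 1) with h | h | h
    · exfalso; revert h; decide
    · exfalso; revert h; decide
    · exact h
  exact hP (hV.P ⟨1, by simpa using h0, by simpa using h1⟩)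

end F2Aux

/-- Let `F₂` be the free group on two generators `a, b` and `σ` the automorphism with
`σ a = a⁻¹`, `σ b = b⁻¹`. Then the subgroup of `Aut(F₂)` generated by the inner
automorphisms together with `σ` is normal in `Aut(F₂)`. -/
theorem closure_inn_and_sigma_normal (σ : MulAut (FreeGroup (Fin 2)))
    (h0 : σ (FreeGroup.of 0) = (FreeGroup.of 0)⁻¹)
    (h1 : σ (FreeGroup.of 1) = (FreeGroup.of 1)⁻¹) :
    (Subgroup.closure
        (insert σ
          (Set.range (MulAut.conj : FreeGroup (Fin 2) →* MulAut (FreeGroup (Fin 2)))))).Normal := by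
  constructor
  intro n hn φ
  induction hn using Subgroup.closure_induction with
  | one => simp
  | mul x y _ _ hx hy => simpa [mul_assoc] using Subgroup.mul_mem _ hx hy
  | inv x _ hx => simpa [mul_assoc] using Subgroup.inv_mem _ hx
  | mem x hx =>
    rcases hx with rfl | ⟨w, rfl⟩
    · have G : F2Aux.Gen (φ (FreeGroup.of 0)) (φ (FreeGroup.of 1)) := by
        intro H a b
        have e : H.comap φ.toMonoidHom = ⊤ := by
          rw [eq_top_iff, ← FreeGroup.closure_range_of, Subgroup.closure_le]
          rintro _ ⟨i, rfl⟩
          fin_cases i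
          · exact a
          · exact b
        rw [eq_top_iff]
        intro y _
        have hy : φ.symm y ∈ H.comap φ.toMonoidHom := by rw [e]; trivial
        simpa using hy
      obtain ⟨w, hw0, hw1⟩ := F2Aux.main x h0 h1 _ _ _ rfl G
      have e : (x * φ).toMonoidHom = (MulAut.conj w * φ * x).toMonoidHom := by
        apply FreeGroup.ext_hom
        intro i
        fin_cases i
        · simp [h0, hw0]
        · simp [h1, hw1]
      have e' : x * φ = MulAut.conj w * φ * x := by
        ext y
        exact DFunLike.congr_fun e y
      have e2 : φ * x * φ⁻¹ = (MulAut.conj w)⁻¹ * x := by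
        rw [mul_assoc] at e'
        rw [mul_inv_eq_iff_eq_mul, mul_assoc, e', inv_mul_cancel_left]
      rw [e2]
      exact Subgroup.mul_mem _ (Subgroup.inv_mem _ (Subgroup.subset_closure (Or.inr ⟨w, rfl⟩)))
        (Subgroup.subset_closure (Or.inl rfl))
    · have e : φ * MulAut.conj w * φ⁻¹ = MulAut.conj (φ w) := by
        ext y
        simp
      rw [e]
      exact Subgroup.subset_closure (Or.inr ⟨_, rfl⟩)
end

section
/- Let F₂ be the free group on two generators a, b, let σ be the automorphism of F₂ with σ(a) = a⁻¹ and σ(b) = b⁻¹, and let u, v ∈ F₂ satisfy σ(u) = u⁻¹ and σ(v) = v⁻¹. Then the automorphisms of F₂ given by x ↦ u⁻¹ σ(x) u and x ↦ v⁻¹ σ(x) v are conjugate in the group Aut(F₂). -/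
/-- The endomorphism fixing the `i`-th generator and multiplying the others by `t`. -/
def transvHom (i : Fin 2) (t : FreeGroup (Fin 2)) : FreeGroup (Fin 2) →* FreeGroup (Fin 2) :=
  FreeGroup.lift (fun k => if k = i then FreeGroup.of i else t * FreeGroup.of k)

theorem transvHom_self (i : Fin 2) (t s : FreeGroup (Fin 2))
    (ht : s = FreeGroup.of i ∨ s = (FreeGroup.of i)⁻¹) : transvHom i t s = s := by
  rcases ht with rfl | rfl <;> simp [transvHom]

theorem transvHom_comp (i : Fin 2) (t : FreeGroup (Fin 2))
    (ht : t = FreeGroup.of i ∨ t = (FreeGroup.of i)⁻¹) :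
    (transvHom i t).comp (transvHom i t⁻¹) = MonoidHom.id _ := by
  have key := transvHom_self i t t ht
  ext k
  by_cases hk : k = i
  · subst hk
    simp [transvHom]
  · have h2 : transvHom i t⁻¹ (FreeGroup.of k) = t⁻¹ * FreeGroup.of k := by simp [transvHom, hk]
    have h3 : transvHom i t (FreeGroup.of k) = t * FreeGroup.of k := by simp [transvHom, hk]
    simp [h2, h3, key]

theorem single_isConj (σ : MulAut (FreeGroup (Fin 2)))
    (h : ∀ i, σ (FreeGroup.of i) = (FreeGroup.of i)⁻¹) (i : Fin 2) (t : FreeGroup (Fin 2))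
    (ht : t = FreeGroup.of i ∨ t = (FreeGroup.of i)⁻¹) :
    IsConj σ (MulAut.conj t * σ) := by
  have ht' : t⁻¹ = FreeGroup.of i ∨ t⁻¹ = (FreeGroup.of i)⁻¹ := by
    rcases ht with rfl | rfl <;> simp
  have c1 := transvHom_comp i t ht
  have c2 := transvHom_comp i t⁻¹ ht'
  rw [inv_inv] at c2
  let φ : MulAut (FreeGroup (Fin 2)) := MonoidHom.toMulEquiv (transvHom i t) (transvHom i t⁻¹) c2 c1
  have hσt : σ t = t⁻¹ := by rcases ht with rfl | rfl <;> simp [h]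
  rw [isConj_iff]
  refine ⟨φ, ?_⟩
  rw [mul_inv_eq_iff_eq_mul]
  have : (φ * σ).toMonoidHom = (MulAut.conj t * σ * φ).toMonoidHom := by
    ext k
    change transvHom i t (σ (FreeGroup.of k)) = t * σ (transvHom i t (FreeGroup.of k)) * t⁻¹
    rw [h, map_inv]
    by_cases hk : k = i
    · subst hk
      rw [transvHom_self k t _ (Or.inl rfl), h]
      rcases ht with rfl | rfl <;> group
    · have h3 : transvHom i t (FreeGroup.of k) = t * FreeGroup.of k := by simp [transvHom, hk]
      rw [h3, map_mul, hσt, h]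
      group
  exact MulEquiv.toMonoidHom_injective this

theorem mk_single (x : Fin 2 × Bool) : FreeGroup.mk [x] = FreeGroup.of x.1 ∨
    FreeGroup.mk [x] = (FreeGroup.of x.1)⁻¹ := by
  obtain ⟨i, b⟩ := x
  cases b
  · right; simp [FreeGroup.of, FreeGroup.invRev]
  · left; rfl

theorem palin_isConj (σ : MulAut (FreeGroup (Fin 2)))
    (h : ∀ i, σ (FreeGroup.of i) = (FreeGroup.of i)⁻¹) (L : List (Fin 2 × Bool))
    (hL : L.Palindrome) : IsConj σ (MulAut.conj (FreeGroup.mk L)⁻¹ * σ) := by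
  induction hL with
  | nil =>
    rw [← FreeGroup.one_eq_mk, inv_one, map_one, one_mul]
  | singleton x =>
    refine single_isConj σ h x.1 _ ?_
    rcases mk_single x with e | e <;> simp [e]
  | @cons_concat x l _ ih =>
    refine ih.trans ?_
    have e : FreeGroup.mk (x :: (l ++ [x])) = FreeGroup.mk [x] * FreeGroup.mk l * FreeGroup.mk [x] := by
      simp
    rw [e]
    have hg : σ (FreeGroup.mk [x]) = (FreeGroup.mk [x])⁻¹ := by
      rcases mk_single x with e | e <;> simp [e, h]
    generalize FreeGroup.mk [x] = g at *
    generalize FreeGroup.mk l = w at *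
    rw [isConj_iff]
    refine ⟨MulAut.conj g⁻¹, ?_⟩
    rw [mul_inv_eq_iff_eq_mul]
    apply MulEquiv.ext
    intro y
    simp [MulAut.mul_apply, hg, mul_assoc]

theorem sigma_mk (σ : MulAut (FreeGroup (Fin 2)))
    (h : ∀ i, σ (FreeGroup.of i) = (FreeGroup.of i)⁻¹) (L : List (Fin 2 × Bool)) :
    (σ (FreeGroup.mk L))⁻¹ = FreeGroup.mk L.reverse := by
  induction L with
  | nil => rw [← FreeGroup.one_eq_mk]; simp [← FreeGroup.one_eq_mk]
  | cons x l ih =>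
    have e : FreeGroup.mk (x :: l) = FreeGroup.mk [x] * FreeGroup.mk l := by simp
    have hg : σ (FreeGroup.mk [x]) = (FreeGroup.mk [x])⁻¹ := by
      rcases mk_single x with e | e <;> simp [e, h]
    rw [e, map_mul, mul_inv_rev, ih, hg, inv_inv, List.reverse_cons, FreeGroup.mul_mk]

theorem base_isConj (σ : MulAut (FreeGroup (Fin 2)))
    (h : ∀ i, σ (FreeGroup.of i) = (FreeGroup.of i)⁻¹) (u : FreeGroup (Fin 2))
    (hu : σ u = u⁻¹) : IsConj σ (MulAut.conj u⁻¹ * σ) := by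
  have h1 := sigma_mk σ h u.toWord
  rw [FreeGroup.mk_toWord, hu, inv_inv] at h1
  have hr : FreeGroup.IsReduced u.toWord.reverse := by
    have := FreeGroup.isReduced_toWord (x := u)
    unfold FreeGroup.IsReduced at *
    rw [List.isChain_reverse]
    refine this.imp ?_
    intro a b hab e
    exact (hab e.symm).symm
  have h2 : u.toWord = u.toWord.reverse := by
    conv_lhs => rw [h1]
    rw [FreeGroup.toWord_mk, hr.reduce_eq]
  have := palin_isConj σ h u.toWord (List.Palindrome.of_reverse_eq h2.symm)
  rwa [FreeGroup.mk_toWord] at this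

/-- Let `F₂` be free on `a, b`, let `σ` be the automorphism with `σ a = a⁻¹`, `σ b = b⁻¹`,
and let `u, v` be palindromes (`σ u = u⁻¹`, `σ v = v⁻¹`). Then the automorphisms
`x ↦ u⁻¹ σ(x) u` and `x ↦ v⁻¹ σ(x) v` are conjugate in `Aut(F₂)`. -/
theorem sigma_gamma_palindrome_isConj (σ : MulAut (FreeGroup (Fin 2)))
    (h0 : σ (FreeGroup.of 0) = (FreeGroup.of 0)⁻¹)
    (h1 : σ (FreeGroup.of 1) = (FreeGroup.of 1)⁻¹)
    (u v : FreeGroup (Fin 2)) (hu : σ u = u⁻¹) (hv : σ v = v⁻¹) :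
    IsConj (MulAut.conj u⁻¹ * σ) (MulAut.conj v⁻¹ * σ) := by
  have h : ∀ i, σ (FreeGroup.of i) = (FreeGroup.of i)⁻¹ := by
    intro i
    fin_cases i
    · exact h0
    · exact h1
  exact (base_isConj σ h u hu).symm.trans (base_isConj σ h v hv)
end

section
/- Let F₂ be the free group on two generators a, b, let σ be the automorphism of F₂ with σ(a) = a⁻¹ and σ(b) = b⁻¹, and let G = F₂ ⋊ C₂ be the semidirect product in which the nontrivial element of the cyclic group C₂ of order two acts on F₂ as σ. Then the subgroup F₂ (the kernel of the projection G → C₂) is characteristic in G, i.e. every automorphism of G maps this subgroup onto itself. -/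
/-- Let `F₂` be free on `a, b`, `σ` the automorphism with `σ a = a⁻¹`, `σ b = b⁻¹`
(an automorphism of order two), and `G = F₂ ⋊ C₂` the semidirect product in which the
nontrivial element of `C₂` acts as `σ`. Then the subgroup `F₂` (the kernel of the
projection `G → C₂`) is characteristic in `G`. -/
theorem kernel_characteristic_in_F2_semidirect_C2 (σ : MulAut (FreeGroup (Fin 2)))
    (h0 : σ (FreeGroup.of 0) = (FreeGroup.of 0)⁻¹)
    (h1 : σ (FreeGroup.of 1) = (FreeGroup.of 1)⁻¹)
    (ψ : Multiplicative (ZMod 2) →* MulAut (FreeGroup (Fin 2)))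
    (hψ : ψ (Multiplicative.ofAdd 1) = σ) :
    (SemidirectProduct.rightHom :
        FreeGroup (Fin 2) ⋊[ψ] Multiplicative (ZMod 2) →* Multiplicative (ZMod 2)).ker.Characteristic := by
  classical
  rw [Subgroup.characteristic_iff_le_comap]
  intro φ
  -- elements outside the kernel are involutions sent to the nontrivial element
  have two : ∀ u v : Multiplicative (ZMod 2), u ≠ 1 → v ≠ 1 → u * v = 1 := by decide
  have key : ∀ x : FreeGroup (Fin 2) ⋊[ψ] Multiplicative (ZMod 2), x * x = 1 → x ≠ 1 →
      (φ x).right ≠ 1 := by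
    intro x hx hne hr
    apply hne
    have h2 : φ x * φ x = 1 := by rw [← map_mul, hx, map_one]
    have h3 : (φ x).left * (φ x).left = 1 := by
      have := congrArg SemidirectProduct.left h2
      simpa [SemidirectProduct.mul_left, hr] using this
    have h4 : (φ x).left = 1 := by
      rw [← pow_two] at h3
      exact (pow_eq_one_iff_left two_ne_zero).1 h3
    have h5 : φ x = 1 := SemidirectProduct.ext h4 hr
    simpa using h5
  have tt : (Multiplicative.ofAdd (1 : ZMod 2)) * Multiplicative.ofAdd 1 = 1 := by decide
  have tn : (Multiplicative.ofAdd (1 : ZMod 2)) ≠ 1 := by decide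
  have inv : ∀ w : FreeGroup (Fin 2), σ w = w⁻¹ →
      (φ ⟨w, Multiplicative.ofAdd 1⟩).right ≠ 1 := by
    intro w hw
    apply key
    · apply SemidirectProduct.ext
      · simp [SemidirectProduct.mul_left, hψ, hw]
      · simpa [SemidirectProduct.mul_right] using tt
    · intro h
      exact tn (congrArg SemidirectProduct.right h)
  have kill : ∀ w : FreeGroup (Fin 2), σ w = w⁻¹ →
      (φ (SemidirectProduct.inl w)).right = 1 := by
    intro w hw
    have e : (SemidirectProduct.inl w : FreeGroup (Fin 2) ⋊[ψ] Multiplicative (ZMod 2)) =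
        ⟨w, Multiplicative.ofAdd 1⟩ * ⟨1, Multiplicative.ofAdd 1⟩ := by
      apply SemidirectProduct.ext
      · simp [SemidirectProduct.mul_left]
      · simpa [SemidirectProduct.mul_right] using tt.symm
    rw [e, map_mul, SemidirectProduct.mul_right]
    exact two _ _ (inv w hw) (inv 1 (by simp))
  have hom : (SemidirectProduct.rightHom.comp (φ.toMonoidHom.comp SemidirectProduct.inl) :
      FreeGroup (Fin 2) →* Multiplicative (ZMod 2)) = 1 := by
    apply FreeGroup.ext_hom
    intro i
    fin_cases i
    · exact kill _ h0
    · exact kill _ h1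
  intro x hx
  rw [← SemidirectProduct.range_inl_eq_ker_rightHom] at hx
  obtain ⟨w, rfl⟩ := hx
  exact DFunLike.congr_fun hom w
end

section
/- Every automorphism of the free group F₂ on two generators that induces the identity map on the abelianization of F₂ is an inner automorphism. Equivalently, the kernel of the natural homomorphism Aut(F₂) → GL₂(ℤ) is exactly Inn(F₂). -/
namespace AutF2

/-- Length of the longest common prefix. -/
def cp {β : Type*} [DecidableEq β] : List β → List β → ℕ
  | x :: xs, y :: ys => if x = y then cp xs ys + 1 else 0
  | _, _ => 0

lemma cp_split {β : Type*} [DecidableEq β] : ∀ x y : List β,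
    ∃ P X Y, x = P ++ X ∧ y = P ++ Y ∧ P.length = cp x y ∧
      (∀ a ∈ X.head?, ∀ b ∈ Y.head?, a ≠ b)
  | [], y => ⟨[], [], y, by simp [cp]⟩
  | x :: xs, [] => ⟨[], x :: xs, [], by simp [cp]⟩
  | x :: xs, y :: ys => by
    by_cases h : x = y
    · obtain ⟨P, X, Y, h1, h2, h3, h4⟩ := cp_split xs ys
      exact ⟨x :: P, X, Y, by simp [h1], by simp [h, h2], by simp [cp, h, h3], h4⟩
    · exact ⟨[], x :: xs, y :: ys, by simp, by simp, by simp [cp, h], by simpa using h⟩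

lemma cp_comm {β : Type*} [DecidableEq β] : ∀ x y : List β, cp x y = cp y x
  | [], [] => rfl
  | [], _ :: _ => rfl
  | _ :: _, [] => rfl
  | x :: xs, y :: ys => by
    by_cases h : x = y
    · simp [cp, h, cp_comm xs ys]
    · simp [cp, h, Ne.symm h]

lemma cp_ultra {β : Type*} [DecidableEq β] : ∀ x y z : List β,
    min (cp x y) (cp y z) ≤ cp x z
  | [], _, _ => by simp [cp]
  | _ :: _, [], _ => by simp [cp]
  | _ :: _, _ :: _, [] => by simp [cp]
  | x :: xs, y :: ys, z :: zs => by
    have := cp_ultra xs ys zs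
    simp only [cp]
    by_cases h : x = y
    · by_cases h' : y = z
      · subst h; subst h'; simp; omega
      · simp [h']
    · simp [h]

open FreeGroup

variable {α : Type*} [DecidableEq α]

/-- Gromov product in the free group. -/
def gp (x y : FreeGroup α) : ℕ := cp x.toWord y.toWord

lemma gp_comm (x y : FreeGroup α) : gp x y = gp y x := cp_comm _ _

lemma gp_ultra (x y z : FreeGroup α) : min (gp x y) (gp y z) ≤ gp x z := cp_ultra _ _ _

lemma isReduced_invRev {L : List (α × Bool)} (h : IsReduced L) : IsReduced (invRev L) := by
  rw [isReduced_iff_reduce_eq] at *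
  rw [reduce_invRev, h]

lemma norm_inv_mul (x y : FreeGroup α) :
    norm (x⁻¹ * y) + 2 * gp x y = norm x + norm y := by
  obtain ⟨P, X, Y, h1, h2, h3, h4⟩ := cp_split x.toWord y.toWord
  have hX : IsReduced X := (isReduced_toWord (x := x)).infix (by rw [h1]; exact List.infix_append' P X [] |>.trans (by simp))
  have hY : IsReduced Y := (isReduced_toWord (x := y)).infix (by rw [h2]; exact List.infix_append' P Y [] |>.trans (by simp))
  have hr : IsReduced (invRev X ++ Y) := by
    refine List.IsChain.append (isReduced_invRev hX) hY ?_
    intro a ha b hb hab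
    have : (a.1, !a.2) ∈ X.head? := by
      cases X with
      | nil => simp [invRev] at ha
      | cons c X =>
        simp [invRev] at ha
        simp [← ha]
    have h5 := h4 _ this b hb
    by_contra hc
    apply h5
    ext
    · exact hab
    · cases h : a.2 <;> cases h' : b.2 <;> simp_all
  have e : x⁻¹ * y = mk (invRev X ++ Y) := by
    rw [← mk_toWord (x := x), ← mk_toWord (x := y), h1, h2, ← mul_mk, ← mul_mk, ← mul_mk, ← inv_mk]
    group
  have e2 : norm (x⁻¹ * y) = X.length + Y.length := by
    rw [e, FreeGroup.norm, toWord_mk, hr.reduce_eq]; simp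
  rw [e2, FreeGroup.norm, FreeGroup.norm, gp, ← h3, h1, h2]
  simp; omega

lemma gp_inv_lt (y : FreeGroup α) (hy : y ≠ 1) : 2 * gp y y⁻¹ < norm y := by
  obtain ⟨P, X, Y, h1, h2, h3, -⟩ := cp_split y.toWord y⁻¹.toWord
  by_contra hc
  apply hy
  rw [gp, ← h3, FreeGroup.norm, h1, List.length_append] at hc
  have e : invRev X ++ invRev P = P ++ Y := by
    rw [← h2, toWord_inv, h1, invRev_append]
  have hp : invRev X <+: P := by
    refine List.prefix_of_prefix_length_le (l₃ := P ++ Y) ?_ (List.prefix_append _ _) ?_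
    · rw [← e]; exact List.prefix_append _ _
    · rw [invRev_length]; omega
  obtain ⟨S, rfl⟩ := hp
  rw [invRev_append, invRev_invRev, List.append_assoc] at e
  have e' := List.append_cancel_left e
  have hS : invRev S = S := (List.append_inj e' (by simp)).1
  have h5 : (mk S : FreeGroup α) = 1 := by
    have : (mk S : FreeGroup α)⁻¹ = mk S := by rw [inv_mk, hS]
    exact self_eq_inv.mp this.symm
  rw [← mk_toWord (x := y), h1, ← mul_mk, ← mul_mk, h5, ← inv_mk, mul_one, inv_mul_cancel]

lemma conj_shorten (u v : FreeGroup α) (h1 : 2 * gp u v = norm u)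
    (h2 : 2 * gp u⁻¹ v⁻¹ = norm u) (h3 : norm u ≤ norm v) :
    ∃ q, norm (q * u * q⁻¹) ≤ norm u ∧ norm (q * (u⁻¹ * v) * q⁻¹) + norm u ≤ norm v := by
  obtain ⟨P, X, Y, a1, a2, a3, -⟩ := cp_split u.toWord v.toWord
  obtain ⟨P', X', Y', b1, b2, b3, -⟩ := cp_split u⁻¹.toWord v⁻¹.toWord
  rw [gp, ← a3, FreeGroup.norm, a1, List.length_append] at h1
  rw [gp, ← b3, FreeGroup.norm, a1, List.length_append] at h2
  rw [FreeGroup.norm, FreeGroup.norm, a1, a2, List.length_append, List.length_append] at h3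
  rw [toWord_inv, a1, invRev_append] at b1
  have hP : invRev X = P' := (List.append_inj b1 (by rw [invRev_length]; omega)).1
  have hv : v.toWord = invRev Y' ++ X := by
    rw [← invRev_invRev (L₁ := v.toWord), ← toWord_inv, b2, invRev_append, ← hP, invRev_invRev]
  have hs : X <:+ Y := by
    refine List.suffix_of_suffix_length_le (l₃ := v.toWord) ?_ ?_ (by omega)
    · rw [hv]; exact List.suffix_append _ _
    · rw [a2]; exact List.suffix_append _ _
  obtain ⟨T, rfl⟩ := hs
  have eu : u = mk P * mk X := by rw [mul_mk, ← a1, mk_toWord]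
  have ev : v = mk P * (mk T * mk X) := by rw [mul_mk, mul_mk, ← a2, mk_toWord]
  refine ⟨mk X, ?_, ?_⟩
  · have : mk X * u * (mk X)⁻¹ = mk (X ++ P) := by rw [eu, ← mul_mk]; group
    rw [this]
    refine norm_mk_le.trans ?_
    rw [FreeGroup.norm, a1]; simp; omega
  · have : mk X * (u⁻¹ * v) * (mk X)⁻¹ = mk T := by rw [eu, ev]; group
    rw [this]
    have := norm_mk_le (L₁ := T)
    rw [FreeGroup.norm.eq_def u, FreeGroup.norm.eq_def v, a1, a2]; simp; omega

/-- Inverse letter. -/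
def li {β : Type*} (y : β × Bool) : β × Bool := (y.1, !y.2)

lemma mk_li {β : Type*} (y : β × Bool) : mk [li y] = (mk [y])⁻¹ := by simp [li, invRev]

lemma nielsen_norm (φ : FreeGroup α →* FreeGroup α)
    (N : ∀ y g h : α × Bool, g ≠ y → h ≠ li y →
      gp (φ (mk [y])) (φ (mk [g])) + gp (φ (mk [y]))⁻¹ (φ (mk [h])) < norm (φ (mk [y]))) :
    ∀ (L : List (α × Bool)) (y : α × Bool), IsReduced (y :: L) → ∀ g, g ≠ y →
      gp (φ (mk (y :: L))) (φ (mk [g])) = gp (φ (mk [y])) (φ (mk [g])) ∧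
      L.length + 1 + gp (φ (mk [y])) (φ (mk [g])) ≤ norm (φ (mk (y :: L))) := by
  intro L
  induction L with
  | nil =>
    intro y _ g hg
    have := N y g y hg (by intro h; have := congrArg Prod.snd h; simp [li] at this)
    exact ⟨rfl, by simp; omega⟩
  | cons z L ih =>
    intro y hr g hg
    have hz : z ≠ li y := by
      rintro rfl
      simp [FreeGroup.IsReduced, li] at hr
    have hr' : IsReduced (z :: L) := hr.infix (List.suffix_cons _ _).isInfix
    have hz' : li y ≠ z := hz.symm
    obtain ⟨i1, i2⟩ := ih z hr' (li y) hz'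
    have hN := N y g z hg hz
    rw [mk_li, _root_.map_inv] at i1 i2
    have e : φ (mk (y :: z :: L)) = φ (mk [y]) * φ (mk (z :: L)) := by
      rw [← _root_.map_mul, mul_mk]; rfl
    set q := φ (mk (y :: z :: L))
    set u := φ (mk [y])
    set q' := φ (mk (z :: L))
    set w := φ (mk [g])
    set t := φ (mk [z])
    have n1 := norm_inv_mul q u
    have n2 := norm_inv_mul u⁻¹ q'
    have e1 : q⁻¹ * u = q'⁻¹ := by rw [e]; group
    rw [e1, norm_inv_eq] at n1
    rw [inv_inv, ← e, norm_inv_eq, gp_comm u⁻¹, i1] at n2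
    rw [gp_comm t] at i2 n2
    have u1 := gp_ultra q u w
    have u2 := gp_ultra u q w
    rw [gp_comm u q] at u2
    simp only [List.length_cons]
    omega

lemma nielsen_norm' [Nontrivial α] (φ : FreeGroup α →* FreeGroup α)
    (N : ∀ y g h : α × Bool, g ≠ y → h ≠ li y →
      gp (φ (mk [y])) (φ (mk [g])) + gp (φ (mk [y]))⁻¹ (φ (mk [h])) < norm (φ (mk [y])))
    (x : FreeGroup α) : norm x ≤ norm (φ x) := by
  have hr := isReduced_toWord (x := x)
  rw [FreeGroup.norm.eq_def x]
  rw [← mk_toWord (x := x)]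
  generalize e : x.toWord = L at *
  have e2 : (mk L).toWord = L := by rw [toWord_mk, hr.reduce_eq]
  rw [e2]
  cases L with
  | nil => simp
  | cons y L =>
    have := (nielsen_norm φ N L y hr (li y) (by intro h; have := congrArg Prod.snd h; simp [li] at this)).2
    simp only [List.length_cons]; omega

/-- The free group of rank two. -/
abbrev F := FreeGroup (Fin 2)

/-- First generator. -/
abbrev ga : F := of 0
/-- Second generator. -/
abbrev gb : F := of 1

/-- The endomorphism sending the generators to `x`, `y`. -/
def eh (x y : F) : F →* F := FreeGroup.lift ![x, y]

@[simp] lemma eh_a (x y : F) : eh x y (of 0) = x := by simp [eh]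
@[simp] lemma eh_b (x y : F) : eh x y (of 1) = y := by simp [eh]

lemma hom_ext {M : Type*} [Monoid M] {f g : F →* M} (h0 : f (of 0) = g (of 0)) (h1 : f (of 1) = g (of 1)) : f = g := by
  apply FreeGroup.ext_hom
  intro i
  fin_cases i
  · exact h0
  · exact h1

lemma aut_ext {f g : MulAut F} (h0 : f (of 0) = g (of 0)) (h1 : f (of 1) = g (of 1)) :
    f = g := by
  have : f.toMonoidHom = g.toMonoidHom := hom_ext h0 h1
  exact MulEquiv.toMonoidHom_injective this

/-- Swap of the generators. -/
def sA : MulAut F := MonoidHom.toMulEquiv (eh gb ga) (eh gb ga)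
  (hom_ext (by simp) (by simp)) (hom_ext (by simp) (by simp))

/-- Inversion of the first generator. -/
def dA : MulAut F := MonoidHom.toMulEquiv (eh ga⁻¹ gb) (eh ga⁻¹ gb)
  (hom_ext (by simp) (by simp)) (hom_ext (by simp) (by simp))

/-- The transvection `b ↦ ab`. -/
def rA : MulAut F := MonoidHom.toMulEquiv (eh ga (ga * gb)) (eh ga (ga⁻¹ * gb))
  (hom_ext (by simp) (by simp)) (hom_ext (by simp) (by simp))

@[simp] lemma sA_a : sA (of 0) = of 1 := eh_a gb ga
@[simp] lemma sA_b : sA (of 1) = of 0 := eh_b gb ga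
@[simp] lemma dA_a : dA (of 0) = (of 0)⁻¹ := eh_a ga⁻¹ gb
@[simp] lemma dA_b : dA (of 1) = of 1 := eh_b ga⁻¹ gb
@[simp] lemma rA_a : rA (of 0) = of 0 := eh_a ga (ga * gb)
@[simp] lemma rA_b : rA (of 1) = of 0 * of 1 := eh_b ga (ga * gb)
@[simp] lemma rAi_a : rA.symm (of 0) = of 0 := eh_a ga (ga⁻¹ * gb)
@[simp] lemma rAi_b : rA.symm (of 1) = (of 0)⁻¹ * of 1 := eh_b ga (ga⁻¹ * gb)

lemma ss : sA * sA = 1 := aut_ext (by simp) (by simp)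
lemma dd : dA * dA = 1 := aut_ext (by simp) (by simp)
lemma drd : dA * rA * dA = rA⁻¹ := aut_ext (by simp) (by simp)
lemma lri : sA * rA * sA * rA⁻¹ = MulAut.conj (of 0)⁻¹ * (rA * (dA * sA)) :=
  aut_ext (by simp) (by simp)
lemma dld : dA * (sA * rA * sA) * dA = MulAut.conj (of 1) * (sA * rA⁻¹ * sA) :=
  aut_ext (by simp) (by simp [mul_assoc])

/-- The signed permutation automorphisms. -/
def DA : Subgroup (MulAut F) := Subgroup.closure {sA, dA}

lemma sA_mem : sA ∈ DA := Subgroup.subset_closure (by simp)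
lemma dA_mem : dA ∈ DA := Subgroup.subset_closure (by simp)

/-- The set of letters. -/
def lets : Set F := {of 0, (of 0)⁻¹, of 1, (of 1)⁻¹}

lemma DA_lets {h : MulAut F} (hh : h ∈ DA) : ∀ x, x ∈ lets ↔ h x ∈ lets := by
  have hs : ∀ x ∈ lets, sA x ∈ lets := by
    rintro x (rfl | rfl | rfl | rfl) <;> simp [lets]
  have hd : ∀ x ∈ lets, dA x ∈ lets := by
    rintro x (rfl | rfl | rfl | rfl) <;> simp [lets]
  induction hh using Subgroup.closure_induction with
  | mem y hy =>
    intro x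
    rcases hy with rfl | rfl
    · refine ⟨hs x, fun h => ?_⟩
      have := hs _ h
      rwa [← MulAut.mul_apply, ss] at this
    · refine ⟨hd x, fun h => ?_⟩
      have := hd _ h
      rwa [← MulAut.mul_apply, dd] at this
  | one => simp
  | mul f g _ _ hf hg =>
    intro x
    rw [MulAut.mul_apply, ← hf, ← hg]
  | inv f _ hf =>
    intro x
    rw [hf (f⁻¹ x), ← MulAut.mul_apply, mul_inv_cancel]; rfl

lemma exists_D (y g : Fin 2 × Bool) (h : y.1 ≠ g.1) :
    ∃ s ∈ DA, s (of 0) = mk [y] ∧ s (of 1) = mk [g] := by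
  have S := sA_mem
  have D := dA_mem
  have M := fun {x y} => DA.mul_mem (x := x) (y := y)
  have e : ∀ i : Fin 2, (mk [(i, true)] : F) = of i := fun _ => rfl
  have e' : ∀ i : Fin 2, (mk [(i, false)] : F) = (of i)⁻¹ := fun _ => rfl
  obtain ⟨i, s⟩ := y
  obtain ⟨j, t⟩ := g
  fin_cases i <;> fin_cases j <;> simp at h <;> cases s <;> cases t <;> simp only [e, e', Fin.zero_eta, Fin.mk_one]
  · exact ⟨dA * (sA * (dA * sA)), M D (M S (M D S)), by simp⟩
  · exact ⟨dA, D, by simp⟩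
  · exact ⟨(sA * (dA * sA)), (M S (M D S)), by simp⟩
  · exact ⟨1, DA.one_mem, by simp⟩
  · exact ⟨dA * (sA * dA), M D (M S D), by simp⟩
  · exact ⟨sA * dA, M S D, by simp⟩
  · exact ⟨dA * sA, M D S, by simp⟩
  · exact ⟨sA, S, by simp⟩

/-- Inner automorphisms. -/
def Inn : Subgroup (MulAut F) := (MulAut.conj (G := F)).range

instance : Inn.Normal where
  conj_mem := by
    rintro _ ⟨w, rfl⟩ g
    refine ⟨g w, ?_⟩
    ext x
    simp

/-- Automorphisms generated by the elementary ones and the inner ones. -/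
def KA : Subgroup (MulAut F) := Subgroup.closure {sA, dA, rA} ⊔ Inn

lemma DA_le : DA ≤ KA :=
  le_trans (Subgroup.closure_mono (by simp [Set.insert_subset_iff])) le_sup_left

lemma rA_mem : rA ∈ KA := 
  (le_sup_left : Subgroup.closure {sA, dA, rA} ≤ KA) (Subgroup.subset_closure (by simp))

lemma conj_mem' (w : F) : MulAut.conj w ∈ KA :=
  (le_sup_right : Inn ≤ KA) ⟨w, rfl⟩

lemma letter_of_norm (x : F) (h : norm x = 1) : ∃ y, x = mk [y] := by
  obtain ⟨y, hy⟩ := List.length_eq_one_iff.mp h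
  exact ⟨y, by rw [← hy, mk_toWord]⟩

lemma norm_letter (φ : MulAut F) (i : Fin 2) (t : Bool) : norm (φ (mk [(i, t)])) = norm (φ (of i)) := by
  cases t
  · have : (mk [(i, false)] : F) = (of i)⁻¹ := rfl
    rw [this, _root_.map_inv, norm_inv_eq]
  · rfl

lemma norm_sum (φ : MulAut F) (y g : Fin 2 × Bool) (h : y.1 ≠ g.1) :
    norm (φ (mk [y])) + norm (φ (mk [g])) = norm (φ (of 0)) + norm (φ (of 1)) := by
  obtain ⟨i, s⟩ := y
  obtain ⟨j, t⟩ := g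
  rw [norm_letter, norm_letter]
  fin_cases i <;> fin_cases j <;> simp at h
  · rfl
  · exact add_comm _ _

lemma mem_KA (n : ℕ) : ∀ φ : MulAut F, norm (φ (of 0)) + norm (φ (of 1)) ≤ n → φ ∈ KA := by
  induction n with
  | zero =>
    intro φ h
    have : norm (φ (of 0)) = 0 := by omega
    rw [FreeGroup.norm_eq_zero] at this
    simp at this
  | succ n ih =>
    intro φ hn
    -- reduction step
    have red : ∀ (y g : Fin 2 × Bool), y.1 ≠ g.1 → ∀ q : F,
        norm (q * φ (mk [y]) * q⁻¹) + norm (q * ((φ (mk [y]))⁻¹ * φ (mk [g])) * q⁻¹) <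
          norm (φ (mk [y])) + norm (φ (mk [g])) → φ ∈ KA := by
      intro y g hyg q hq
      obtain ⟨s, hs, h0, h1⟩ := exists_D y g hyg
      have := ih (MulAut.conj q * φ * s * rA⁻¹) (by
        rw [norm_sum φ y g hyg] at hq
        simp [h0, h1, -mul_mk, -inv_mk]
        omega)
      have h2 := KA.mul_mem this rA_mem
      rw [inv_mul_cancel_right] at h2
      rw [Subgroup.mul_mem_cancel_right _ (DA_le hs)] at h2
      rwa [Subgroup.mul_mem_cancel_left _ (conj_mem' q)] at h2
    by_contra hφ
    have n1 : ∀ (y g : Fin 2 × Bool), y.1 ≠ g.1 →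
        2 * gp (φ (mk [y])) (φ (mk [g])) ≤ norm (φ (mk [y])) := by
      intro y g h
      have h1 := norm_inv_mul (φ (mk [y])) (φ (mk [g]))
      by_contra hc
      refine hφ (red y g h 1 ?_)
      simp only [one_mul, inv_one, mul_one]
      omega
    have pos : ∀ y : Fin 2 × Bool, φ (mk [y]) ≠ 1 := by
      intro y h
      rw [map_eq_one_iff φ φ.injective] at h
      have : norm (mk [y]) = 1 := rfl
      rw [h] at this
      simp at this
    have inv_l : ∀ y, φ (mk [li y]) = (φ (mk [y]))⁻¹ := fun y => by rw [mk_li, _root_.map_inv]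
    have li1 : ∀ y : Fin 2 × Bool, (li y).1 = y.1 := fun _ => rfl
    have lili : ∀ y : Fin 2 × Bool, li (li y) = y := fun _ => by simp [li]
    have cases_l : ∀ y g : Fin 2 × Bool, y.1 = g.1 → g = y ∨ g = li y := by
      rintro ⟨i, s⟩ ⟨j, t⟩ h
      cases s <;> cases t <;> simp_all [li]
    have cases_g : ∀ y g h : Fin 2 × Bool, y.1 ≠ g.1 → y.1 ≠ h.1 → g.1 = h.1 := by
      intro y g h h1 h2; omega
    have n1' : ∀ (y g : Fin 2 × Bool), g ≠ y →
        2 * gp (φ (mk [y])) (φ (mk [g])) ≤ norm (φ (mk [y])) ∧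
        (y.1 = g.1 → 2 * gp (φ (mk [y])) (φ (mk [g])) < norm (φ (mk [y]))) := by
      intro y g h
      by_cases h1 : y.1 = g.1
      · obtain rfl | rfl := cases_l y g h1
        · exact absurd rfl h
        · have := gp_inv_lt _ (pos y)
          rw [inv_l]
          exact ⟨this.le, fun _ => this⟩
      · exact ⟨n1 y g h1, fun h2 => absurd h2 h1⟩
    have N : ∀ y g h : Fin 2 × Bool, g ≠ y → h ≠ li y →
      gp (φ (mk [y])) (φ (mk [g])) + gp (φ (mk [y]))⁻¹ (φ (mk [h])) < norm (φ (mk [y])) := by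
      intro y g h hg hh
      by_contra hc
      obtain ⟨a1, a2⟩ := n1' y g hg
      obtain ⟨b1, b2⟩ := n1' (li y) h hh
      rw [inv_l, norm_inv_eq] at b1 b2
      rw [li1] at b2
      have hyg : y.1 ≠ g.1 := fun e => by have := a2 e; omega
      have hyh : y.1 ≠ h.1 := fun e => by have := b2 e; omega
      obtain rfl | rfl := cases_l g h (cases_g y g h hyg hyh)
      · have u := gp_ultra (φ (mk [y])) (φ (mk [h])) (φ (mk [y]))⁻¹
        rw [gp_comm (φ (mk [h]))] at u
        have := gp_inv_lt _ (pos y)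
        omega
      · have c1 := n1 g y hyg.symm
        rw [gp_comm] at c1
        rw [inv_l] at b1 hc
        obtain ⟨q, q1, q2⟩ := conj_shorten (φ (mk [y])) (φ (mk [g])) (by omega) (by omega) (by omega)
        have p1 : norm (φ (mk [y])) ≠ 0 := by rw [Ne, FreeGroup.norm_eq_zero]; exact pos y
        exact hφ (red y g hyg q (by omega))
    have key : ∀ i : Fin 2, ∃ y, φ.symm (of i) = mk [y] := by
      intro i
      apply letter_of_norm
      have h1 := nielsen_norm' φ.toMonoidHom N (φ.symm (of i))
      have h2 : norm (φ.toMonoidHom (φ.symm (of i))) = 1 := by simp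
      have h3 : norm (φ.symm (of i)) ≠ 0 := by rw [Ne, FreeGroup.norm_eq_zero]; simp
      omega
    obtain ⟨y, hy⟩ := key 0
    obtain ⟨g, hg⟩ := key 1
    have hyg : y.1 ≠ g.1 := by
      intro e
      obtain rfl | rfl := cases_l y g e
      · have := φ.symm.injective (hy.trans hg.symm)
        exact absurd (of_injective this) (by decide)
      · rw [mk_li, ← hy, ← _root_.map_inv] at hg
        have := φ.symm.injective hg
        have := congrArg toWord this
        revert this
        decide
    obtain ⟨s, hs, h0, h1⟩ := exists_D y g hyg
    have : φ⁻¹ = s := aut_ext (hy.trans h0.symm) (hg.trans h1.symm)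
    exact hφ (KA.inv_mem_iff.mp (this ▸ DA_le hs))

section nf

variable {Q : Type*} [Group Q]

/-- Being a product of an element of `D`, a positive element and an element of `D`. -/
def NF (s d r x : Q) : Prop :=
  ∃ h1 ∈ Subgroup.closure {s, d}, ∃ p ∈ Submonoid.closure {r, s * r * s},
    ∃ h2 ∈ Subgroup.closure {s, d}, x = h1 * p * h2

lemma NF.mul {s d r x h h' : Q} (hx : NF s d r x) (hh : h ∈ Subgroup.closure {s, d})
    (hh' : h' ∈ Subgroup.closure {s, d}) : NF s d r (h * x * h') := by
  obtain ⟨h1, m1, p, mp, h2, m2, rfl⟩ := hx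
  exact ⟨h * h1, mul_mem hh m1, p, mp, h2 * h', mul_mem m2 hh', by group⟩

lemma NF.pos {s d r p : Q} (hp : p ∈ Submonoid.closure {r, s * r * s}) : NF s d r p :=
  ⟨1, one_mem _, p, hp, 1, one_mem _, by group⟩

lemma nf_main (s d r : Q) (ss : s * s = 1) (dd : d * d = 1) (drd : d * r * d = r⁻¹)
    (dld : d * (s * r * s) * d = s * r⁻¹ * s) (lri : s * r * s * r⁻¹ = r * (d * s))
    (x : Q) (hx : x ∈ Subgroup.closure {s, d, r}) : NF s d r x := by
  have si : s⁻¹ = s := inv_eq_of_mul_eq_one_left ss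
  have di : d⁻¹ = d := inv_eq_of_mul_eq_one_left dd
  have ms : s ∈ Subgroup.closure {s, d} := Subgroup.subset_closure (by simp)
  have md : d ∈ Subgroup.closure {s, d} := Subgroup.subset_closure (by simp)
  have mr : r ∈ Submonoid.closure {r, s * r * s} := Submonoid.subset_closure (by simp)
  have ml : s * r * s ∈ Submonoid.closure {r, s * r * s} := Submonoid.subset_closure (by simp)
  have sl : s * (s * r * s) * s = r := by
    calc s * (s * r * s) * s = (s * s) * r * (s * s) := by group
      _ = r := by rw [ss]; group
  have hri : NF s d r r⁻¹ := by
    rw [← drd]; exact (NF.pos mr).mul md md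
  have pri : ∀ p ∈ Submonoid.closure {r, s * r * s}, NF s d r (p * r⁻¹) := by
    intro p hp
    induction hp using Submonoid.closure_induction_right with
    | one => rwa [one_mul]
    | mul_right x hx y hy _ =>
      rcases hy with rfl | rfl
      · rw [mul_inv_cancel_right]; exact NF.pos hx
      · rw [mul_assoc, lri]
        have := (NF.pos (d := d) (mul_mem hx mr)).mul (one_mem _) (mul_mem md ms)
        rw [one_mul] at this
        rwa [← mul_assoc]
  have sps : ∀ p ∈ Submonoid.closure {r, s * r * s}, s * p * s ∈ Submonoid.closure {r, s * r * s} := by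
    intro p hp
    induction hp using Submonoid.closure_induction with
    | mem x hx =>
      rcases hx with rfl | rfl
      · exact ml
      · rw [sl]; exact mr
    | one => rw [mul_one, ss]; exact one_mem _
    | mul x y _ _ hx hy =>
      have : s * (x * y) * s = (s * x * s) * (s * y * s) := by
        calc s * (x * y) * s = s * x * 1 * y * s := by group
          _ = _ := by rw [← ss]; group
      rw [this]; exact mul_mem hx hy
  have li : (s * r * s)⁻¹ = s * r⁻¹ * s := by rw [mul_inv_rev, mul_inv_rev, si, mul_assoc]
  have pli : ∀ p ∈ Submonoid.closure {r, s * r * s}, NF s d r (p * (s * r * s)⁻¹) := by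
    intro p hp
    have := (pri _ (sps p hp)).mul ms ms
    have e : p * (s * r * s)⁻¹ = s * (s * p * s * r⁻¹) * s := by
      rw [li]
      calc p * (s * r⁻¹ * s) = 1 * p * s * r⁻¹ * s := by group
        _ = _ := by rw [← ss]; group
    rwa [e]
  set E : Set Q := {r, r⁻¹, s * r * s, (s * r * s)⁻¹} with hE
  have pE : ∀ p ∈ Submonoid.closure {r, s * r * s}, ∀ t ∈ E, NF s d r (p * t) := by
    rintro p hp t (rfl | rfl | rfl | rfl)
    · exact NF.pos (mul_mem hp mr)
    · exact pri p hp
    · exact NF.pos (mul_mem hp ml)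
    · exact pli p hp
  have Ei : ∀ t ∈ E, t⁻¹ ∈ E := by
    rintro t (rfl | rfl | rfl | rfl) <;> simp only [hE, inv_inv, Set.mem_insert_iff, Set.mem_singleton_iff, true_or, or_true]
  have conj_inv' : ∀ h t : Q, h * t⁻¹ * h⁻¹ = (h * t * h⁻¹)⁻¹ := by intros; group
  have sE : ∀ t ∈ E, s * t * s⁻¹ ∈ E := by
    have h1 : s * r * s⁻¹ ∈ E := by rw [si]; simp [hE]
    have h2 : s * (s * r * s) * s⁻¹ ∈ E := by rw [si, sl]; simp [hE]
    rintro t (rfl | rfl | rfl | rfl)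
    · exact h1
    · rw [conj_inv']; exact Ei _ h1
    · exact h2
    · rw [conj_inv']; exact Ei _ h2
  have dE : ∀ t ∈ E, d * t * d⁻¹ ∈ E := by
    have h1 : d * r * d⁻¹ ∈ E := by rw [di, drd]; simp [hE]
    have h2 : d * (s * r * s) * d⁻¹ ∈ E := by rw [di, dld, ← li]; simp [hE]
    rintro t (rfl | rfl | rfl | rfl)
    · exact h1
    · rw [conj_inv']; exact Ei _ h1
    · exact h2
    · rw [conj_inv']; exact Ei _ h2
  have invol : ∀ h t : Q, h * h = 1 → h * (h * t * h⁻¹) * h⁻¹ = t := by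
    intro h t hh
    calc h * (h * t * h⁻¹) * h⁻¹ = (h * h) * t * (h * h)⁻¹ := by group
      _ = t := by rw [hh]; group
  have hE' : ∀ h ∈ Subgroup.closure {s, d}, ∀ t, t ∈ E ↔ h * t * h⁻¹ ∈ E := by
    intro h hh
    induction hh using Subgroup.closure_induction with
    | mem h hh =>
      intro t
      rcases hh with rfl | rfl
      · exact ⟨sE t, fun h' => by have := sE _ h'; rwa [invol _ _ ss] at this⟩
      · exact ⟨dE t, fun h' => by have := dE _ h'; rwa [invol _ _ dd] at this⟩
    | one => simp
    | mul f g _ _ hf hg =>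
      intro t
      rw [hg, hf]
      have : f * (g * t * g⁻¹) * f⁻¹ = f * g * t * (f * g)⁻¹ := by group
      rw [this]
    | inv f _ hf =>
      intro t
      rw [hf (f⁻¹ * t * f⁻¹⁻¹)]
      have : f * (f⁻¹ * t * f⁻¹⁻¹) * f⁻¹ = t := by group
      rw [this]
  have NE : ∀ x, NF s d r x → ∀ t ∈ E, NF s d r (x * t) := by
    rintro x ⟨h1, m1, p, mp, h2, m2, rfl⟩ t ht
    have := (pE p mp _ ((hE' h2 m2 t).mp ht)).mul m1 m2
    have e : h1 * p * h2 * t = h1 * (p * (h2 * t * h2⁻¹)) * h2 := by group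
    rwa [e]
  have ND : ∀ x, NF s d r x → ∀ h ∈ Subgroup.closure {s, d}, NF s d r (x * h) := by
    intro x hx h hh
    have := hx.mul (one_mem _) hh
    rwa [one_mul] at this
  induction hx using Subgroup.closure_induction_right with
  | one => exact NF.pos (one_mem _)
  | mul_right x _ y hy ih =>
    rcases hy with rfl | rfl | rfl
    · exact ND _ ih _ ms
    · exact ND _ ih _ md
    · exact NE _ ih _ (by simp [hE])
  | mul_inv_cancel x _ y hy ih =>
    rcases hy with rfl | rfl | rfl
    · exact ND _ ih _ (inv_mem ms)
    · exact ND _ ih _ (inv_mem md)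
    · exact NE _ ih _ (by simp [hE])

end nf

lemma decomp (φ : MulAut F) : ∃ h1 ∈ DA, ∃ p ∈ Submonoid.closure {rA, sA * rA * sA},
    ∃ h2 ∈ DA, ∃ w : F, φ = h1 * p * h2 * MulAut.conj w := by
  have hφ := mem_KA _ φ le_rfl
  rw [KA, Subgroup.mem_sup_of_normal_right] at hφ
  obtain ⟨k, hk, i, hi, rfl⟩ := hφ
  let π : MulAut F →* MulAut F ⧸ Inn := QuotientGroup.mk' Inn
  have hπ : ∀ w, π (MulAut.conj w) = 1 := fun w => by
    rw [← MonoidHom.mem_ker, QuotientGroup.ker_mk']; exact ⟨w, rfl⟩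
  have hk' : π k ∈ Subgroup.closure {π sA, π dA, π rA} := by
    have := Subgroup.mem_map_of_mem π hk
    rwa [MonoidHom.map_closure, Set.image_insert_eq, Set.image_pair] at this
  have c1 := congrArg π ss
  have c2 := congrArg π dd
  have c3 := congrArg π drd
  have c4 := congrArg π dld
  have c5 := congrArg π lri
  simp only [_root_.map_mul, _root_.map_inv, hπ, one_mul, _root_.map_one] at c1 c2 c3 c4 c5
  obtain ⟨h1, m1, p, mp, h2, m2, e⟩ := nf_main (π sA) (π dA) (π rA) c1 c2 c3 c4 c5 (π k) hk'
  have hD : Subgroup.closure {π sA, π dA} = DA.map π := by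
    rw [DA, MonoidHom.map_closure, Set.image_pair]
  have hP : Submonoid.closure {π rA, π sA * π rA * π sA} =
      (Submonoid.closure {rA, sA * rA * sA}).map π := by
    rw [MonoidHom.map_mclosure, Set.image_pair, _root_.map_mul, _root_.map_mul]
  rw [hD] at m1 m2
  rw [hP] at mp
  obtain ⟨h1, m1, rfl⟩ := m1
  obtain ⟨h2, m2, rfl⟩ := m2
  obtain ⟨p, mp, rfl⟩ := mp
  rw [← _root_.map_mul, ← _root_.map_mul] at e
  have e2 := QuotientGroup.eq.mp e.symm
  obtain ⟨w, hw⟩ := Inn.mul_mem e2 hi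
  exact ⟨h1, m1, p, mp, h2, m2, w, by rw [hw]; group⟩

/-- Total exponent sum. -/
def es : F →* Multiplicative ℤ := FreeGroup.lift fun _ => Multiplicative.ofAdd 1

lemma es_pos (p : MulAut F) (hp : p ∈ Submonoid.closure {rA, sA * rA * sA}) :
    (p = 1) ∨ (1 ≤ (es (p (of 0))).toAdd ∧ 1 ≤ (es (p (of 1))).toAdd ∧
      3 ≤ (es (p (of 0))).toAdd + (es (p (of 1))).toAdd) := by
  induction hp using Submonoid.closure_induction_right with
  | one => exact Or.inl rfl
  | mul_right x hx y hy ih =>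
    right
    have ih' : 1 ≤ (es (x (of 0))).toAdd ∧ 1 ≤ (es (x (of 1))).toAdd := by
      rcases ih with rfl | h
      · simp [es]
      · exact ⟨h.1, h.2.1⟩
    rcases hy with rfl | rfl
    · simp; omega
    · simp; omega

lemma es_lets (x : F) (hx : x ∈ lets) : (es x).toAdd ≤ 1 := by
  rcases hx with rfl | rfl | rfl | rfl <;> simp [es]

/-- A hom separating the letters. -/
def sep : F →* Multiplicative ℤ :=
  FreeGroup.lift ![Multiplicative.ofAdd 1, Multiplicative.ofAdd 3]

lemma sep_inj (x y : F) (hx : x ∈ lets) (hy : y ∈ lets) (h : sep x = sep y) : x = y := by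
  have h := congrArg Multiplicative.toAdd h
  rcases hx with rfl | rfl | rfl | rfl <;> rcases hy with rfl | rfl | rfl | rfl <;>
    first | rfl | (exfalso; simp [sep] at h)

end AutF2

/-- Every automorphism of the free group `F₂` on two generators that induces the identity
on the abelianization of `F₂` is an inner automorphism (i.e. the kernel of the natural map
`Aut(F₂) → GL₂(ℤ)` is exactly `Inn(F₂)`). -/
theorem aut_F2_trivial_on_abelianization_is_inner (φ : MulAut (FreeGroup (Fin 2)))
    (h : ∀ x : FreeGroup (Fin 2), Abelianization.of (φ x) = Abelianization.of x) :
    ∃ w : FreeGroup (Fin 2), φ = MulAut.conj w := by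
  obtain ⟨h1, m1, p, mp, h2, m2, w, rfl⟩ := AutF2.decomp φ
  have key : ∀ (f : AutF2.F →* Multiplicative ℤ) (x : AutF2.F), f (h1 (p (h2 x))) = f x := by
    intro f x
    have h3 := congrArg (Abelianization.lift f) (h x)
    simpa using h3
  have la : FreeGroup.of 0 ∈ AutF2.lets := by simp [AutF2.lets]
  have lb : FreeGroup.of 1 ∈ AutF2.lets := by simp [AutF2.lets]
  have k2 : ∀ x ∈ AutF2.lets, (AutF2.es (p x)).toAdd ≤ 1 := by
    intro x hx
    have h4 := key (AutF2.es.comp (h1⁻¹ : MulAut AutF2.F).toMonoidHom) (h2⁻¹ x)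
    have h5 : AutF2.es (p x) = AutF2.es (h1⁻¹ (h2⁻¹ x)) := by
      simpa using h4
    rw [h5]
    apply AutF2.es_lets
    rw [← AutF2.DA_lets (inv_mem m1), ← AutF2.DA_lets (inv_mem m2)]
    exact hx
  have hp : p = 1 := by
    rcases AutF2.es_pos p mp with hp | ⟨_, _, hp⟩
    · exact hp
    · have := k2 _ la
      have := k2 _ lb
      omega
  subst hp
  have k3 : ∀ x ∈ AutF2.lets, (h1 * h2) x = x := by
    intro x hx
    refine AutF2.sep_inj _ _ ((AutF2.DA_lets (mul_mem m1 m2) x).mp hx) hx (key _ x)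
  have : h1 * h2 = 1 := AutF2.aut_ext (k3 _ la) (k3 _ lb)
  exact ⟨w, by rw [mul_one, this, one_mul]⟩
end

section
/- Let P = (1 1; 1 2) and Q = (2 1; 1 1) in GL₂(ℤ). Then the subgroup of GL₂(ℤ) generated by P and Q is free of rank 2 with free basis {P, Q} (i.e. the homomorphism from the free group on two generators to GL₂(ℤ) sending the generators to P and Q is injective), and this subgroup has index 24 in GL₂(ℤ). -/
open Matrix

/-- The matrix `P = (1 1; 1 2)` as an element of `GL₂(ℤ)`. -/
def Pgl : GL (Fin 2) ℤ :=
  ⟨!![1, 1; 1, 2], !![2, -1; -1, 1],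
    by norm_num [Matrix.mul_fin_two, ← Matrix.one_fin_two],
    by norm_num [Matrix.mul_fin_two, ← Matrix.one_fin_two]⟩

/-- The matrix `Q = (2 1; 1 1)` as an element of `GL₂(ℤ)`. -/
def Qgl : GL (Fin 2) ℤ :=
  ⟨!![2, 1; 1, 1], !![1, -1; -1, 2],
    by norm_num [Matrix.mul_fin_two, ← Matrix.one_fin_two],
    by norm_num [Matrix.mul_fin_two, ← Matrix.one_fin_two]⟩

namespace PQ24

open scoped Pointwise

def Tgl : GL (Fin 2) ℤ :=
  ⟨!![1, 1; 0, 1], !![1, -1; 0, 1], by decide, by decide⟩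

def Sgl : GL (Fin 2) ℤ :=
  ⟨!![0, -1; 1, 0], !![0, 1; -1, 0], by decide, by decide⟩

def Dgl : GL (Fin 2) ℤ :=
  ⟨!![-1, 0; 0, 1], !![-1, 0; 0, 1], by decide, by decide⟩

lemma Tgl_eq : Tgl = SpecialLinearGroup.toGL ModularGroup.T := Units.ext (by rfl)
lemma Sgl_eq : Sgl = SpecialLinearGroup.toGL ModularGroup.S := Units.ext (by rfl)

abbrev H : Subgroup (GL (Fin 2) ℤ) := Subgroup.closure {Pgl, Qgl}

lemma hP : Pgl ∈ H := Subgroup.subset_closure (by simp)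
lemma hQ : Qgl ∈ H := Subgroup.subset_closure (by simp)

lemma coe_P : (Pgl : Matrix (Fin 2) (Fin 2) ℤ) = !![1, 1; 1, 2] := rfl
lemma coe_Q : (Qgl : Matrix (Fin 2) (Fin 2) ℤ) = !![2, 1; 1, 1] := rfl
lemma coe_Pi : ((Pgl⁻¹ : GL (Fin 2) ℤ) : Matrix (Fin 2) (Fin 2) ℤ) = !![2, -1; -1, 1] := rfl
lemma coe_Qi : ((Qgl⁻¹ : GL (Fin 2) ℤ) : Matrix (Fin 2) (Fin 2) ℤ) = !![1, -1; -1, 2] := rfl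

/-- Conjugation by `g` preserves `H` when it sends generators into `H`. -/
lemma conj_mem (g : GL (Fin 2) ℤ) (h1 : g * Pgl * g⁻¹ ∈ H) (h2 : g * Qgl * g⁻¹ ∈ H) :
    ∀ h ∈ H, g * h * g⁻¹ ∈ H := by
  have : H ≤ H.comap (MulAut.conj g).toMonoidHom := by
    rw [Subgroup.closure_le]
    rintro x (rfl | rfl)
    · simpa using h1
    · simpa using h2
  intro h hh
  simpa using this hh

lemma mem_norm (g : GL (Fin 2) ℤ) (h1 : g * Pgl * g⁻¹ ∈ H) (h2 : g * Qgl * g⁻¹ ∈ H)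
    (h3 : g⁻¹ * Pgl * g ∈ H) (h4 : g⁻¹ * Qgl * g ∈ H) :
    g ∈ Subgroup.normalizer (H : Set (GL (Fin 2) ℤ)) := by
  rw [Subgroup.mem_normalizer_iff]
  intro h
  refine ⟨conj_mem g h1 h2 h, fun hh => ?_⟩
  have := conj_mem g⁻¹ (by simpa using h3) (by simpa using h4) _ hh
  simpa [mul_assoc] using this

lemma T_norm : Tgl ∈ Subgroup.normalizer (H : Set (GL (Fin 2) ℤ)) := by
  apply mem_norm
  · rw [show Tgl * Pgl * Tgl⁻¹ = Qgl from Units.ext (by decide)]; exact hQ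
  · rw [show Tgl * Qgl * Tgl⁻¹ = Qgl * Pgl⁻¹ from Units.ext (by decide)]
    exact mul_mem hQ (inv_mem hP)
  · rw [show Tgl⁻¹ * Pgl * Tgl = Qgl⁻¹ * Pgl from Units.ext (by decide)]
    exact mul_mem (inv_mem hQ) hP
  · rw [show Tgl⁻¹ * Qgl * Tgl = Pgl from Units.ext (by decide)]; exact hP

lemma S_norm : Sgl ∈ Subgroup.normalizer (H : Set (GL (Fin 2) ℤ)) := by
  apply mem_norm
  · rw [show Sgl * Pgl * Sgl⁻¹ = Pgl⁻¹ from Units.ext (by decide)]; exact inv_mem hP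
  · rw [show Sgl * Qgl * Sgl⁻¹ = Qgl⁻¹ from Units.ext (by decide)]; exact inv_mem hQ
  · rw [show Sgl⁻¹ * Pgl * Sgl = Pgl⁻¹ from Units.ext (by decide)]; exact inv_mem hP
  · rw [show Sgl⁻¹ * Qgl * Sgl = Qgl⁻¹ from Units.ext (by decide)]; exact inv_mem hQ

lemma D_norm : Dgl ∈ Subgroup.normalizer (H : Set (GL (Fin 2) ℤ)) := by
  apply mem_norm
  · rw [show Dgl * Pgl * Dgl⁻¹ = Qgl⁻¹ from Units.ext (by decide)]; exact inv_mem hQ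
  · rw [show Dgl * Qgl * Dgl⁻¹ = Pgl⁻¹ from Units.ext (by decide)]; exact inv_mem hP
  · rw [show Dgl⁻¹ * Pgl * Dgl = Qgl⁻¹ from Units.ext (by decide)]; exact inv_mem hQ
  · rw [show Dgl⁻¹ * Qgl * Dgl = Pgl⁻¹ from Units.ext (by decide)]; exact inv_mem hP

lemma SL_le (K : Subgroup (GL (Fin 2) ℤ)) (hS : Sgl ∈ K) (hT : Tgl ∈ K) (g : GL (Fin 2) ℤ)
    (hg : (g : Matrix (Fin 2) (Fin 2) ℤ).det = 1) : g ∈ K := by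
  have h1 : Subgroup.closure {ModularGroup.S, ModularGroup.T} ≤
      K.comap SpecialLinearGroup.toGL := by
    rw [Subgroup.closure_le]
    rintro x (rfl | rfl)
    · simpa [Sgl_eq] using hS
    · simpa [Tgl_eq] using hT
  rw [SpecialLinearGroup.SL2Z_generators] at h1
  have h2 := h1 (Subgroup.mem_top ⟨(g : Matrix (Fin 2) (Fin 2) ℤ), hg⟩)
  change SpecialLinearGroup.toGL ⟨(g : Matrix (Fin 2) (Fin 2) ℤ), hg⟩ ∈ K at h2
  convert h2
  exact Units.ext rfl

lemma det_cases (g : GL (Fin 2) ℤ) :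
    (g : Matrix (Fin 2) (Fin 2) ℤ).det = 1 ∨
      ((g * Dgl : GL (Fin 2) ℤ) : Matrix (Fin 2) (Fin 2) ℤ).det = 1 := by
  have h : IsUnit (g : Matrix (Fin 2) (Fin 2) ℤ).det := (Matrix.isUnit_iff_isUnit_det _).1 g.isUnit
  rcases Int.isUnit_iff.1 h with h | h
  · exact Or.inl h
  · right
    rw [Units.val_mul, Matrix.det_mul, h]
    decide

lemma D_mul_D : Dgl * Dgl = 1 := Units.ext (by decide)

instance H_normal : H.Normal := by
  rw [← Subgroup.normalizer_eq_top_iff, Subgroup.eq_top_iff']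
  intro g
  rcases det_cases g with h | h
  · exact SL_le _ S_norm T_norm g h
  · have := mul_mem (SL_le _ S_norm T_norm _ h) D_norm
    rwa [mul_assoc, D_mul_D, mul_one] at this

/-- The abelianization character of `SL₂(ℤ)`, reduced to a ring `R`. -/
def chi {R : Type*} [CommRing R] (a b c d : R) : R :=
  (1 - c ^ 2) * (b * d + 3 * (c - 1) * d + c + 3) + c * (a + d - 3)

def Good (n : ℕ) (g : GL (Fin 2) ℤ) : Prop :=
  (g 0 0 * g 1 1 - g 0 1 * g 1 0 : ZMod n) = 1 ∧
    chi (g 0 0 : ZMod n) (g 0 1) (g 1 0) (g 1 1) = 0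

/-- Right translation by `P`, `Q` and their inverses preserves the predicate. -/
def Stable (n : ℕ) : Prop :=
  ∀ a b c d : ZMod n, a * d - b * c = 1 → chi a b c d = 0 →
    chi (a + b) (a + b * 2) (c + d) (c + d * 2) = 0 ∧
    chi (a * 2 + b) (a + b) (c * 2 + d) (c + d) = 0 ∧
    chi (a * 2 + -b) (-a + b) (c * 2 + -d) (-c + d) = 0 ∧
    chi (a + -b) (-a + b * 2) (c + -d) (-c + d * 2) = 0

lemma stable3 : Stable 3 := by unfold Stable chi; decide +kernel
lemma stable4 : Stable 4 := by unfold Stable chi; decide +kernel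

lemma good_of_mem (n : ℕ) (hn : Stable n) (g : GL (Fin 2) ℤ) (hg : g ∈ H) : Good n g := by
  induction hg using Subgroup.closure_induction_right with
  | one => simp [Good, chi]
  | mul_right x y _ hy ih =>
    obtain ⟨h1, h2⟩ := ih
    obtain ⟨p, q, -, -⟩ := hn _ _ _ _ h1 h2
    rcases hy with rfl | rfl
    · refine ⟨?_, ?_⟩
      · rw [← h1]
        simp [Units.val_mul, Matrix.mul_apply, Fin.sum_univ_two, coe_P]
        ring
      · simpa [Units.val_mul, Matrix.mul_apply, Fin.sum_univ_two, coe_P] using p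
    · refine ⟨?_, ?_⟩
      · rw [← h1]
        simp [Units.val_mul, Matrix.mul_apply, Fin.sum_univ_two, coe_Q]
        ring
      · simpa [Units.val_mul, Matrix.mul_apply, Fin.sum_univ_two, coe_Q] using q
  | mul_inv_cancel x y _ hy ih =>
    obtain ⟨h1, h2⟩ := ih
    obtain ⟨-, -, p, q⟩ := hn _ _ _ _ h1 h2
    rcases hy with rfl | rfl
    · refine ⟨?_, ?_⟩
      · rw [← h1]
        simp [Units.val_mul, Matrix.mul_apply, Fin.sum_univ_two, coe_Pi, -Matrix.coe_units_inv]
        ring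
      · simpa [Units.val_mul, Matrix.mul_apply, Fin.sum_univ_two, coe_Pi,
          -Matrix.coe_units_inv] using p
    · refine ⟨?_, ?_⟩
      · rw [← h1]
        simp [Units.val_mul, Matrix.mul_apply, Fin.sum_univ_two, coe_Qi, -Matrix.coe_units_inv]
        ring
      · simpa [Units.val_mul, Matrix.mul_apply, Fin.sum_univ_two, coe_Qi,
          -Matrix.coe_units_inv] using q

lemma coe_T_zpow (k : ℤ) :
    ((Tgl ^ k : GL (Fin 2) ℤ) : Matrix (Fin 2) (Fin 2) ℤ) = !![1, k; 0, 1] := by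
  rw [Tgl_eq, ← map_zpow, SpecialLinearGroup.coe_GL_coe_matrix, ModularGroup.coe_T_zpow]

lemma dvd_of_T_zpow_mem (n : ℕ) (hn : Stable n) (k : ℤ) (h : Tgl ^ k ∈ H) : (n : ℤ) ∣ k := by
  have := (good_of_mem n hn _ h).2
  rw [coe_T_zpow] at this
  rw [← ZMod.intCast_zmod_eq_zero_iff_dvd]
  simpa [chi] using this

lemma twelve_dvd (k : ℤ) (h : Tgl ^ k ∈ H) : (12 : ℤ) ∣ k := by
  have h3 := dvd_of_T_zpow_mem 3 stable3 k h
  have h4 := dvd_of_T_zpow_mem 4 stable4 k h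
  push_cast at h3 h4
  omega

lemma D_not_mem (k : ℤ) : Tgl ^ k * Dgl ∉ H := by
  intro h
  have := (good_of_mem 3 stable3 _ h).1
  rw [Units.val_mul, coe_T_zpow, show (Dgl : Matrix (Fin 2) (Fin 2) ℤ) = !![-1, 0; 0, 1] from rfl]
    at this
  simp at this
  revert this
  decide

/-- The image of `T` in the quotient. -/
abbrev t : GL (Fin 2) ℤ ⧸ H := QuotientGroup.mk Tgl
abbrev δ : GL (Fin 2) ℤ ⧸ H := QuotientGroup.mk Dgl

lemma S_T3 : (QuotientGroup.mk Sgl : GL (Fin 2) ℤ ⧸ H) * t ^ 3 = 1 := by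
  rw [← QuotientGroup.mk_pow, ← QuotientGroup.mk_mul, QuotientGroup.eq_one_iff,
    show Sgl * Tgl ^ 3 = Qgl⁻¹ * Pgl from Units.ext (by decide)]
  exact mul_mem (inv_mem hQ) hP

lemma t12 : t ^ 12 = 1 := by
  have h := eq_inv_of_mul_eq_one_left S_T3
  have h4 : (QuotientGroup.mk Sgl : GL (Fin 2) ℤ ⧸ H) ^ 4 = 1 := by
    rw [← QuotientGroup.mk_pow, show Sgl ^ 4 = 1 from Units.ext (by decide), QuotientGroup.mk_one]
  rw [h, inv_pow, ← pow_mul, inv_eq_one] at h4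
  exact h4

lemma mk_mem_zpowers (g : GL (Fin 2) ℤ) (hg : (g : Matrix (Fin 2) (Fin 2) ℤ).det = 1) :
    (QuotientGroup.mk g : GL (Fin 2) ℤ ⧸ H) ∈ Subgroup.zpowers t := by
  have := SL_le ((Subgroup.zpowers t).comap (QuotientGroup.mk' H)) ?_ ?_ g hg
  · exact this
  · rw [Subgroup.mem_comap, QuotientGroup.mk'_apply, eq_inv_of_mul_eq_one_left S_T3]
    exact inv_mem (Subgroup.npow_mem_zpowers _ _)
  · exact Subgroup.mem_zpowers t

lemma t_red (k : ℤ) : ∃ m : Fin 12, t ^ k = t ^ (m : ℕ) := by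
  refine ⟨⟨(k % 12).toNat, by omega⟩, ?_⟩
  have h : k = 12 * (k / 12) + ((k % 12).toNat : ℤ) := by omega
  conv_lhs => rw [h]
  rw [_root_.zpow_add, _root_.zpow_mul, zpow_natCast]
  have : t ^ (12 : ℤ) = 1 := by exact_mod_cast t12
  rw [this, _root_.one_zpow, one_mul]

def rep : Fin 12 × Bool → GL (Fin 2) ℤ ⧸ H := fun p => t ^ (p.1 : ℕ) * (if p.2 then δ else 1)

lemma rep_surj : Function.Surjective rep := by
  intro x
  obtain ⟨g, rfl⟩ := QuotientGroup.mk_surjective x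
  rcases det_cases g with h | h
  · obtain ⟨k, hk⟩ := mk_mem_zpowers g h
    obtain ⟨m, hm⟩ := t_red k
    refine ⟨(m, false), ?_⟩
    simp only [rep]
    rw [← hm, ← hk]
    simp
  · obtain ⟨k, hk⟩ := mk_mem_zpowers _ h
    obtain ⟨m, hm⟩ := t_red k
    refine ⟨(m, true), ?_⟩
    simp only [rep]
    rw [← hm, if_pos trivial]
    change t ^ k = _ at hk
    rw [hk, ← QuotientGroup.mk_mul, mul_assoc, D_mul_D, mul_one]

lemma t_inj (m n : Fin 12) (h : t ^ (m : ℕ) = t ^ (n : ℕ)) : m = n := by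
  have h2 : t ^ ((m : ℤ) - (n : ℤ)) = 1 := by
    rw [_root_.zpow_sub, zpow_natCast, zpow_natCast, h, mul_inv_cancel]
  rw [← QuotientGroup.mk_zpow, QuotientGroup.eq_one_iff] at h2
  have := twelve_dvd _ h2
  omega

lemma t_ne (m n : Fin 12) (h : t ^ (m : ℕ) * δ = t ^ (n : ℕ)) : False := by
  have h2 : t ^ ((m : ℤ) - (n : ℤ)) * δ = 1 := by
    rw [sub_eq_neg_add, _root_.zpow_add, _root_.zpow_neg, zpow_natCast, zpow_natCast, mul_assoc, h,
      inv_mul_cancel]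
  rw [← QuotientGroup.mk_zpow, ← QuotientGroup.mk_mul, QuotientGroup.eq_one_iff] at h2
  exact D_not_mem _ h2

lemma rep_inj : Function.Injective rep := by
  rintro ⟨m, e⟩ ⟨n, f⟩ h
  cases e <;> cases f <;> simp only [rep, if_true, Bool.false_eq_true, if_false, mul_one] at h
  · rw [t_inj m n h]
  · exact (t_ne _ _ h.symm).elim
  · exact (t_ne _ _ h).elim
  · rw [t_inj m n (mul_right_cancel h)]

lemma index_H : H.index = 24 := by
  rw [Subgroup.index, ← Nat.card_congr (Equiv.ofBijective rep ⟨rep_inj, rep_surj⟩)]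
  simp

/-! Ping-pong: `GL₂(ℤ)` acts on itself, cells determined by the slope of the first column. -/

def XQ : Set (GL (Fin 2) ℤ) := {g | (0 < g 1 0 ∧ g 1 0 ≤ g 0 0) ∨ (g 1 0 < 0 ∧ g 0 0 ≤ g 1 0)}
def XP : Set (GL (Fin 2) ℤ) :=
  {g | (0 < g 1 0 ∧ 0 ≤ g 0 0 ∧ g 0 0 < g 1 0) ∨ (g 1 0 < 0 ∧ g 1 0 < g 0 0 ∧ g 0 0 ≤ 0)}
def YQ : Set (GL (Fin 2) ℤ) :=
  {g | (0 < g 1 0 ∧ -g 1 0 ≤ g 0 0 ∧ g 0 0 < 0) ∨ (g 1 0 < 0 ∧ 0 < g 0 0 ∧ g 0 0 ≤ -g 1 0)}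
def YP : Set (GL (Fin 2) ℤ) :=
  {g | g 1 0 = 0 ∨ (0 < g 1 0 ∧ g 0 0 < -g 1 0) ∨ (g 1 0 < 0 ∧ -g 1 0 < g 0 0)}

lemma col_ne (g : GL (Fin 2) ℤ) : ¬ (g 0 0 = 0 ∧ g 1 0 = 0) := by
  rintro ⟨h1, h2⟩
  have h : IsUnit (g : Matrix (Fin 2) (Fin 2) ℤ).det := (Matrix.isUnit_iff_isUnit_det _).1 g.isUnit
  rw [Matrix.det_fin_two, h1, h2] at h
  simp at h

lemma actP (g : GL (Fin 2) ℤ) : (Pgl * g) 0 0 = g 0 0 + g 1 0 ∧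
    (Pgl * g) 1 0 = g 0 0 + 2 * g 1 0 := by
  simp [Units.val_mul, Matrix.mul_apply, Fin.sum_univ_two, coe_P]
lemma actQ (g : GL (Fin 2) ℤ) : (Qgl * g) 0 0 = 2 * g 0 0 + g 1 0 ∧
    (Qgl * g) 1 0 = g 0 0 + g 1 0 := by
  simp [Units.val_mul, Matrix.mul_apply, Fin.sum_univ_two, coe_Q]
lemma actPi (g : GL (Fin 2) ℤ) : (Pgl⁻¹ * g) 0 0 = 2 * g 0 0 + - g 1 0 ∧
    (Pgl⁻¹ * g) 1 0 = - g 0 0 + g 1 0 := by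
  simp [Units.val_mul, Matrix.mul_apply, Fin.sum_univ_two, coe_Pi, -Matrix.coe_units_inv]
lemma actQi (g : GL (Fin 2) ℤ) : (Qgl⁻¹ * g) 0 0 = g 0 0 + - g 1 0 ∧
    (Qgl⁻¹ * g) 1 0 = - g 0 0 + 2 * g 1 0 := by
  simp [Units.val_mul, Matrix.mul_apply, Fin.sum_univ_two, coe_Qi, -Matrix.coe_units_inv]

lemma mapP : Pgl • YPᶜ ⊆ XP := by
  rintro _ ⟨g, hg, rfl⟩
  have h0 := col_ne g
  have h := actP g
  simp only [YP, XP, Set.mem_compl_iff, Set.mem_ofPred_eq, smul_eq_mul] at *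
  omega
lemma mapQ : Qgl • YQᶜ ⊆ XQ := by
  rintro _ ⟨g, hg, rfl⟩
  have h0 := col_ne g
  have h := actQ g
  simp only [YQ, XQ, Set.mem_compl_iff, Set.mem_ofPred_eq, smul_eq_mul] at *
  omega
lemma mapPi : Pgl⁻¹ • XPᶜ ⊆ YP := by
  rintro _ ⟨g, hg, rfl⟩
  have h0 := col_ne g
  have h := actPi g
  simp only [YP, XP, Set.mem_compl_iff, Set.mem_ofPred_eq, smul_eq_mul] at *
  omega
lemma mapQi : Qgl⁻¹ • XQᶜ ⊆ YQ := by
  rintro _ ⟨g, hg, rfl⟩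
  have h0 := col_ne g
  have h := actQi g
  simp only [YQ, XQ, Set.mem_compl_iff, Set.mem_ofPred_eq, smul_eq_mul] at *
  omega

lemma dXX : Disjoint XP XQ := by
  rw [Set.disjoint_left]; intro g h1 h2; simp only [XP, XQ, Set.mem_ofPred_eq] at *; omega
lemma dYY : Disjoint YP YQ := by
  rw [Set.disjoint_left]; intro g h1 h2; simp only [YP, YQ, Set.mem_ofPred_eq] at *; omega
lemma dPP : Disjoint XP YP := by
  rw [Set.disjoint_left]; intro g h1 h2; simp only [XP, YP, Set.mem_ofPred_eq] at *; omega
lemma dPQ : Disjoint XP YQ := by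
  rw [Set.disjoint_left]; intro g h1 h2; simp only [XP, YQ, Set.mem_ofPred_eq] at *; omega
lemma dQP : Disjoint XQ YP := by
  rw [Set.disjoint_left]; intro g h1 h2; simp only [XQ, YP, Set.mem_ofPred_eq] at *; omega
lemma dQQ : Disjoint XQ YQ := by
  rw [Set.disjoint_left]; intro g h1 h2; simp only [XQ, YQ, Set.mem_ofPred_eq] at *; omega

lemma free : Function.Injective
    (FreeGroup.lift ![Pgl, Qgl] : FreeGroup (Fin 2) →* GL (Fin 2) ℤ) := by
  refine FreeGroup.injective_lift_of_ping_pong _ ![XP, XQ] ![YP, YQ] ?_ ?_ ?_ ?_ ?_ ?_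
  · intro i
    fin_cases i
    · exact ⟨Sgl, Or.inl (by decide)⟩
    · exact ⟨Qgl, Or.inl (by decide)⟩
  · intro i j hij
    fin_cases i <;> fin_cases j <;> first | exact absurd rfl hij | exact dXX | exact dXX.symm
  · intro i j hij
    fin_cases i <;> fin_cases j <;> first | exact absurd rfl hij | exact dYY | exact dYY.symm
  · intro i j
    fin_cases i <;> fin_cases j <;> first | exact dPP | exact dPQ | exact dQP | exact dQQ
  · intro i
    fin_cases i
    · exact mapP
    · exact mapQ
  · intro i
    fin_cases i
    · exact mapPi
    · exact mapQi

end PQ24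

/-- The subgroup of `GL₂(ℤ)` generated by `P = (1 1; 1 2)` and `Q = (2 1; 1 1)` is free of
rank 2 with basis `{P, Q}` (the homomorphism from the free group on two generators sending
the generators to `P, Q` is injective), and it has index 24 in `GL₂(ℤ)`. -/
theorem PQ_free_basis_and_index_24 :
    Function.Injective (FreeGroup.lift ![Pgl, Qgl] : FreeGroup (Fin 2) →* GL (Fin 2) ℤ) ∧
      (Subgroup.closure {Pgl, Qgl}).index = 24 := by
  exact ⟨PQ24.free, PQ24.index_H⟩
end

section
/- There exists a subgroup B of GL₄(ℤ) that is isomorphic to the direct product F₂ × F₂ of two free groups of rank 2 and such that no nontrivial element of B fixes the row vector v = (1, 0, 1, 0) ∈ ℤ⁴; that is, B ∩ Stab(v) is the trivial subgroup. -/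
open Matrix

namespace PP

def ga : GL (Fin 2) ℤ :=
  ⟨!![1, 3; 0, 1], !![1, -3; 0, 1], by decide, by decide⟩

def gb : GL (Fin 2) ℤ :=
  ⟨!![4, -3; 3, -2], !![-2, 3; -3, 4], by decide, by decide⟩

def gen : Fin 2 → GL (Fin 2) ℤ := ![ga, gb]

def phi : FreeGroup (Fin 2) →* GL (Fin 2) ℤ := FreeGroup.lift gen

def letter (s : Fin 2 × Bool) : GL (Fin 2) ℤ := cond s.2 (gen s.1) (gen s.1)⁻¹

/-- Ping-pong sets, in the coordinates `x = u 0`, `z = u 0 + u 1`. -/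
def X (s : Fin 2 × Bool) (u : Fin 2 → ℤ) : Prop :=
  match s with
  | (0, true) => (0 < u 0 ∧ u 0 < u 0 + u 1) ∨ (u 0 < 0 ∧ u 0 + u 1 < u 0)
  | (0, false) => (0 < u 0 ∧ u 0 + u 1 < - u 0) ∨ (u 0 < 0 ∧ - u 0 < u 0 + u 1)
  | (1, true) => (0 < u 0 + u 1 ∧ u 0 + u 1 < u 0) ∨ (u 0 + u 1 < 0 ∧ u 0 < u 0 + u 1)
  | (1, false) => (0 < u 0 + u 1 ∧ u 0 < - (u 0 + u 1)) ∨ (u 0 + u 1 < 0 ∧ - (u 0 + u 1) < u 0)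

lemma step (s t : Fin 2 × Bool) (h : s.1 = t.1 → s.2 = t.2) (u : Fin 2 → ℤ) (hu : X s u) :
    X t (u ᵥ* (letter t : Matrix (Fin 2) (Fin 2) ℤ)) := by
  obtain ⟨i, b⟩ := s
  obtain ⟨j, c⟩ := t
  fin_cases i <;> fin_cases j <;> cases b <;> cases c <;>
    simp [X, letter, gen, ga, gb, vecMul, dotProduct, Fin.sum_univ_two, Units.inv_mk,
      -Matrix.coe_units_inv] at h hu ⊢ <;> omega

lemma start (t : Fin 2 × Bool) :
    X t (![1, 0] ᵥ* (letter t : Matrix (Fin 2) (Fin 2) ℤ)) := by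
  obtain ⟨j, c⟩ := t
  fin_cases j <;> cases c <;>
    simp [X, letter, gen, ga, gb, vecMul, dotProduct, Fin.sum_univ_two, Units.inv_mk,
      -Matrix.coe_units_inv]

lemma not_X (t : Fin 2 × Bool) : ¬ X t ![1, 0] := by
  obtain ⟨j, c⟩ := t
  fin_cases j <;> cases c <;> simp [X]

lemma run (L : List (Fin 2 × Bool)) : ∀ (s : Fin 2 × Bool) (u : Fin 2 → ℤ), X s u →
    FreeGroup.IsReduced (s :: L) →
    ∃ t, X t (u ᵥ* ((L.map letter).prod : GL (Fin 2) ℤ).val) := by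
  induction L with
  | nil => intro s u hu _; exact ⟨s, by simpa using hu⟩
  | cons t L ih =>
    intro s u hu hr
    rw [FreeGroup.isReduced_cons_cons] at hr
    obtain ⟨r, hr'⟩ := ih t _ (step s t hr.1 u hu) hr.2
    refine ⟨r, ?_⟩
    rw [List.map_cons, List.prod_cons, Units.val_mul, ← vecMul_vecMul]
    exact hr'

lemma phi_fix (w : FreeGroup (Fin 2))
    (h : ![1, 0] ᵥ* (phi w : Matrix (Fin 2) (Fin 2) ℤ) = ![1, 0]) : w = 1 := by
  have hr : FreeGroup.IsReduced w.toWord := FreeGroup.isReduced_toWord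
  have hw : phi w = (w.toWord.map letter).prod := by
    conv_lhs => rw [← FreeGroup.mk_toWord (x := w)]
    rw [phi, FreeGroup.lift_mk]; rfl
  rw [hw] at h
  rw [← FreeGroup.toWord_eq_nil_iff]
  cases hL : w.toWord with
  | nil => rfl
  | cons t L =>
    rw [hL] at h hr
    obtain ⟨r, hr'⟩ := run L t _ (start t) hr
    rw [List.map_cons, List.prod_cons, Units.val_mul, ← vecMul_vecMul] at h
    rw [h] at hr'
    exact absurd hr' (not_X r)

def blk : Matrix (Fin 2) (Fin 2) ℤ × Matrix (Fin 2) (Fin 2) ℤ →* Matrix (Fin 4) (Fin 4) ℤ where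
  toFun p := !![p.1 0 0, p.1 0 1, 0, 0; p.1 1 0, p.1 1 1, 0, 0;
    0, 0, p.2 0 0, p.2 0 1; 0, 0, p.2 1 0, p.2 1 1]
  map_one' := by decide
  map_mul' p q := by
    ext i j
    fin_cases i <;> fin_cases j <;> simp [Matrix.mul_apply, Fin.sum_univ_succ]

def Phi : FreeGroup (Fin 2) × FreeGroup (Fin 2) →* GL (Fin 4) ℤ :=
  ((Units.map blk).comp (MulEquiv.prodUnits.symm.toMonoidHom)).comp (phi.prodMap phi)

lemma Phi_val (w : FreeGroup (Fin 2) × FreeGroup (Fin 2)) :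
    (Phi w : Matrix (Fin 4) (Fin 4) ℤ) = blk ((phi w.1).val, (phi w.2).val) := rfl

lemma Phi_fix (w : FreeGroup (Fin 2) × FreeGroup (Fin 2))
    (h : ![1, 0, 1, 0] ᵥ* (Phi w : Matrix (Fin 4) (Fin 4) ℤ) = ![1, 0, 1, 0]) : w = 1 := by
  rw [Phi_val] at h
  have h0 := congrFun h 0
  have h1 := congrFun h 1
  have h2 := congrFun h 2
  have h3 := congrFun h 3
  simp [blk, vecMul, dotProduct, Fin.sum_univ_succ] at h0 h1 h2 h3
  refine Prod.ext (phi_fix _ ?_) (phi_fix _ ?_)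
  · ext i; fin_cases i <;> simp [vecMul, dotProduct, Fin.sum_univ_succ, h0, h1]
  · ext i; fin_cases i <;> simp [vecMul, dotProduct, Fin.sum_univ_succ, h2, h3]

end PP

/-- There is a subgroup `B` of `GL₄(ℤ)` isomorphic to `F₂ × F₂` such that no nontrivial
element of `B` fixes the row vector `v = (1, 0, 1, 0) ∈ ℤ⁴`; that is, `B ∩ Stab(v) = 1`. -/
theorem exists_F2xF2_in_GL4_trivial_stab :
    ∃ B : Subgroup (GL (Fin 4) ℤ),
      Nonempty (B ≃* (FreeGroup (Fin 2) × FreeGroup (Fin 2))) ∧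
        ∀ M ∈ B, Matrix.vecMul ![1, 0, 1, 0] (M : Matrix (Fin 4) (Fin 4) ℤ) = ![1, 0, 1, 0] →
          M = 1 := by
  have hinj : Function.Injective PP.Phi := by
    rw [injective_iff_map_eq_one]
    intro w hw
    apply PP.Phi_fix
    rw [hw]; simp
  refine ⟨PP.Phi.range, ⟨(MonoidHom.ofInjective hinj).symm⟩, ?_⟩
  rintro _ ⟨w, rfl⟩ h
  rw [PP.Phi_fix w h, map_one]
end

section
/- Let F₃ be the free group on three generators q, a, b, and let K be the subgroup of F₃ generated by a and b (a free group of rank 2). For w₁, w₂ ∈ K, the map q ↦ w₁⁻¹ q w₂, a ↦ a, b ↦ b extends to an automorphism of F₃, and the resulting map K × K → Aut(F₃), (w₁, w₂) ↦ (q ↦ w₁⁻¹ q w₂, a ↦ a, b ↦ b), is an injective group homomorphism. -/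
/-- The subgroup of the free group `F₃ = ⟨q, a, b⟩` generated by `a` and `b`
(here `q = of 0`, `a = of 1`, `b = of 2`). -/
def Kab : Subgroup (FreeGroup (Fin 3)) :=
  Subgroup.closure {FreeGroup.of 1, FreeGroup.of 2}

namespace KabAux

abbrev F := FreeGroup (Fin 3)

/-- The endomorphism `q ↦ u⁻¹ q v`, `a ↦ a`, `b ↦ b`. -/
def endo (u v : F) : F →* F :=
  FreeGroup.lift (fun i => if i = 0 then u⁻¹ * FreeGroup.of 0 * v else FreeGroup.of i)

theorem endo_zero (u v : F) : endo u v (FreeGroup.of 0) = u⁻¹ * FreeGroup.of 0 * v := by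
  simp [endo]

theorem endo_ne (u v : F) (i : Fin 3) (hi : i ≠ 0) :
    endo u v (FreeGroup.of i) = FreeGroup.of i := by
  simp [endo, hi]

theorem endo_fix (u v : F) {w : F} (hw : w ∈ Kab) : endo u v w = w := by
  have h : Kab ≤ MonoidHom.eqLocus (endo u v) (MonoidHom.id F) := by
    unfold Kab
    rw [Subgroup.closure_le]
    rintro x (rfl | rfl)
    · exact endo_ne u v 1 (by decide)
    · exact endo_ne u v 2 (by decide)
  exact h hw

theorem endo_comp (u v : F) {s t : F} (hu : s ∈ Kab) (hv : t ∈ Kab) :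
    (endo u v).comp (endo s t) = endo (u * s) (v * t) := by
  ext i
  by_cases hi : i = 0
  · subst hi
    simp only [MonoidHom.comp_apply, endo_zero, map_mul, map_inv, endo_fix u v hu,
      endo_fix u v hv]
    group
  · simp only [MonoidHom.comp_apply, endo_ne _ _ i hi]

theorem endo_one : endo 1 1 = MonoidHom.id F := by
  ext i
  by_cases hi : i = 0
  · subst hi
    simp [endo_zero]
  · simp [endo_ne _ _ i hi]

/-- The automorphism attached to a pair of elements of `K`. -/
def aut (w : Kab × Kab) : MulAut F :=
  MonoidHom.toMulEquiv (endo w.1 w.2) (endo (w.1 : F)⁻¹ (w.2 : F)⁻¹)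
    (by rw [endo_comp _ _ w.1.2 w.2.2, inv_mul_cancel, inv_mul_cancel, endo_one])
    (by rw [endo_comp _ _ (inv_mem w.1.2) (inv_mem w.2.2), mul_inv_cancel, mul_inv_cancel,
      endo_one])

theorem aut_apply (w : Kab × Kab) (x : F) : aut w x = endo w.1 w.2 x := rfl

def autHom : (Kab × Kab) →* MulAut F :=
  MonoidHom.mk' aut (by
    intro w v
    ext x
    rw [MulAut.mul_apply, aut_apply, aut_apply, aut_apply, ← MonoidHom.comp_apply,
      endo_comp _ _ v.1.2 v.2.2]
    rfl)

/-- `K` acts on the left copy of `F₃` in `F₃ ⊕ F₃` by translation. -/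
def leftHom : F →* Equiv.Perm (F ⊕ F) :=
  (Equiv.Perm.sumCongrHom F F).comp
    ((MulAction.toPermHom F F).prod 1)

/-- `q` swaps the two copies, `a` and `b` act on the left copy. -/
def rep : F →* Equiv.Perm (F ⊕ F) :=
  FreeGroup.lift (fun i => if i = 0 then Equiv.sumComm F F else leftHom (FreeGroup.of i))

theorem rep_K {w : F} (hw : w ∈ Kab) : rep w = leftHom w := by
  have h : Kab ≤ MonoidHom.eqLocus rep leftHom := by
    unfold Kab
    rw [Subgroup.closure_le]
    rintro x (rfl | rfl)
    · change rep _ = leftHom _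
      simp [rep]
    · change rep _ = leftHom _
      simp [rep]
  exact h hw

theorem rep_zero : rep (FreeGroup.of 0) = Equiv.sumComm F F := by simp [rep]

theorem leftHom_inl (w x : F) : leftHom w (Sum.inl x) = Sum.inl (w * x) := rfl

theorem leftHom_inr (w x : F) : leftHom w (Sum.inr x) = Sum.inr x := rfl

theorem key {u v : F} (hu : u ∈ Kab) (hv : v ∈ Kab)
    (h : u⁻¹ * FreeGroup.of 0 * v = FreeGroup.of 0) : u = 1 ∧ v = 1 := by
  have h1 : FreeGroup.of 0 * v = u * FreeGroup.of 0 := by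
    rw [mul_assoc, inv_mul_eq_iff_eq_mul] at h
    exact h
  have h2 := congrArg rep h1
  rw [map_mul, map_mul, rep_zero, rep_K hu, rep_K hv] at h2
  have e1 := Equiv.congr_fun h2 (Sum.inl 1)
  have e2 := Equiv.congr_fun h2 (Sum.inr 1)
  simp only [Equiv.Perm.mul_apply, leftHom_inl, leftHom_inr, Equiv.sumComm_apply, Sum.swap_inl,
    Sum.swap_inr, Sum.inl.injEq, Sum.inr.injEq, mul_one] at e1 e2
  exact ⟨e2.symm, e1⟩

end KabAux

/-- Let `F₃` be free on `q, a, b` and `K = ⟨a, b⟩`. For `w₁, w₂ ∈ K` the assignment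
`q ↦ w₁⁻¹ q w₂`, `a ↦ a`, `b ↦ b` extends to an automorphism of `F₃`, and the resulting
map `K × K → Aut(F₃)` is an injective group homomorphism. -/
theorem exists_injective_hom_KxK_to_autF3 :
    ∃ Θ : (Kab × Kab) →* MulAut (FreeGroup (Fin 3)),
      Function.Injective Θ ∧
        ∀ w : Kab × Kab,
          Θ w (FreeGroup.of 0) =
              (w.1 : FreeGroup (Fin 3))⁻¹ * FreeGroup.of 0 * (w.2 : FreeGroup (Fin 3)) ∧
            Θ w (FreeGroup.of 1) = FreeGroup.of 1 ∧
            Θ w (FreeGroup.of 2) = FreeGroup.of 2 := by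
  refine ⟨KabAux.autHom, ?_, fun w => ⟨KabAux.endo_zero _ _, KabAux.endo_ne w.1 w.2 1 (by decide),
    KabAux.endo_ne w.1 w.2 2 (by decide)⟩⟩
  rw [injective_iff_map_eq_one]
  intro w hw
  have h : KabAux.endo w.1 w.2 (FreeGroup.of 0) = FreeGroup.of 0 :=
    DFunLike.congr_fun hw (FreeGroup.of 0)
  rw [KabAux.endo_zero] at h
  obtain ⟨h1, h2⟩ := KabAux.key w.1.2 w.2.2 h
  exact Prod.ext (Subtype.ext h1) (Subtype.ext h2)
end

section
/- Let F₃ be the free group on three generators q, a, b, and let w₁, w₂ be elements of the subgroup of F₃ generated by a and b. If the element (w₁ q w₂) * a * (w₁ q w₂) * b * (w₁ q w₂) is conjugate in F₃ to q * a * q * b * q, then w₁ = 1 and w₂ = 1. -/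
open FreeGroup in
theorem aux_cr_rot {α : Type*} {s : α × Bool} {X : List (α × Bool)}
    (h : IsCyclicallyReduced (s :: X)) : IsCyclicallyReduced (X ++ [s]) := by
  obtain ⟨h1, h2⟩ := h
  rcases List.eq_nil_or_concat X with rfl | ⟨X', t, rfl⟩
  · simp
  · unfold FreeGroup.IsReduced at h1
    rw [List.isChain_cons] at h1
    refine ⟨?_, ?_⟩
    · unfold FreeGroup.IsReduced
      rw [List.isChain_append]
      refine ⟨h1.2, by simp, ?_⟩
      intro x hx y hy
      simp at hx hy
      subst hx hy
      exact h2 t (by simp [List.getLast?_cons]) s (by simp)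
    · intro a ha b hb
      simp at ha
      subst ha
      have : b ∈ (X' ++ [t]).head? := by
        cases X' <;> simp_all
      exact h1.1 b (by simpa using this)

open FreeGroup in
theorem aux_cr_rot_back {α : Type*} {s : α × Bool} {X : List (α × Bool)}
    (h : IsCyclicallyReduced (X ++ [s])) : IsCyclicallyReduced (s :: X) := by
  obtain ⟨h1, h2⟩ := h
  cases X with
  | nil => simp
  | cons t X' =>
    unfold FreeGroup.IsReduced at h1
    rw [List.isChain_append] at h1
    refine ⟨?_, ?_⟩
    · unfold FreeGroup.IsReduced
      rw [List.isChain_cons]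
      refine ⟨?_, h1.1⟩
      intro y hy
      simp at hy
      subst hy
      exact h2 s (by simp [List.getLast?_cons]) t (by simp)
    · intro a ha b hb
      simp at hb
      subst hb
      exact h1.2.2 a (by simpa [List.getLast?_cons_cons] using ha) s (by simp)

open FreeGroup in
theorem aux_conj {α : Type*} [DecidableEq α] : ∀ (G X Y : List (α × Bool)),
    IsReduced G → IsCyclicallyReduced X → IsCyclicallyReduced Y →
    mk X * mk G = mk G * mk Y → X ~r Y := by
  intro G
  induction G with
  | nil =>
    intro X Y _ hX hY h
    have h' : mk X = mk Y := by
      have : (mk [] : FreeGroup α) = 1 := rfl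
      rw [this] at h
      simpa using h
    have := reduce.sound h'
    rw [hX.1.reduce_eq, hY.1.reduce_eq] at this
    rw [this]
  | cons s G ih =>
    intro X Y hG hX hY h
    have hG' : IsReduced G := by
      unfold FreeGroup.IsReduced at hG ⊢
      exact (List.isChain_cons.1 hG).2
    have hsG : (mk (s :: G) : FreeGroup α) = mk [s] * mk G := by simp [mul_mk]
    have hinv : (mk [(s.1, !s.2)] : FreeGroup α) = (mk [s])⁻¹ := by simp [inv_mk, invRev]
    rcases eq_or_ne X [] with rfl | hne
    · have : (mk [] : FreeGroup α) = 1 := rfl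
      rw [this, one_mul] at h
      have h' : mk Y = mk [] := by
        rw [this]
        exact (mul_eq_left.1 h.symm)
      have := reduce.sound h'
      rw [hY.1.reduce_eq] at this
      rw [this]; rfl
    by_cases c1 : ∃ X', X = s :: X'
    · obtain ⟨X', rfl⟩ := c1
      have := ih (X' ++ [s]) Y hG' (aux_cr_rot hX) hY (by
        have e1 : (mk (s :: X') : FreeGroup α) = mk [s] * mk X' := by simp [mul_mk]
        rw [hsG, e1] at h
        rw [← mul_mk]
        apply mul_left_cancel (a := mk [s])
        simpa [mul_assoc] using h)
      refine List.IsRotated.trans ?_ this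
      have := List.isRotated_append (l := [s]) (l' := X')
      simpa using this
    by_cases c2 : ∃ X', X = X' ++ [(s.1, !s.2)]
    · obtain ⟨X', rfl⟩ := c2
      have := ih ((s.1, !s.2) :: X') Y hG' (aux_cr_rot_back hX) hY (by
        have e1 : (mk ((s.1, !s.2) :: X') : FreeGroup α) = mk [(s.1, !s.2)] * mk X' := by
          simp [mul_mk]
        rw [hsG, ← mul_mk, hinv] at h
        rw [e1, hinv]
        rw [mul_assoc, inv_mul_eq_iff_eq_mul, ← mul_assoc (mk [s]), ← h]
        group)
      refine List.IsRotated.trans ?_ this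
      exact List.isRotated_append
    exfalso
    have hinvred : IsReduced (invRev (s :: G)) := by
      rw [isReduced_iff_reduce_eq, reduce_invRev, hG.reduce_eq]
    have hred : IsReduced (invRev (s :: G) ++ (X ++ s :: G)) := by
      have hXr := hX.1
      unfold FreeGroup.IsReduced at *
      rw [List.isChain_append, List.isChain_append]
      refine ⟨hinvred, ⟨hXr, hG, ?_⟩, ?_⟩
      · intro x hx y hy hxy
        simp at hy
        subst hy
        by_contra hc
        apply c2
        rcases List.eq_nil_or_concat X with rfl | ⟨X', t, rfl⟩
        · simp at hx
        · simp at hx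
          subst hx
          refine ⟨X', ?_⟩
          have : t = (s.1, !s.2) := by
            ext
            · simp [hxy]
            · simpa using Bool.eq_not_of_ne hc
          simp [this]
      · intro x hx y hy hxy
        cases X with
        | nil => exact absurd rfl hne
        | cons t X' =>
          simp at hy
          subst hy
          simp [invRev] at hx
          subst hx
          by_contra hc
          apply c1
          refine ⟨X', ?_⟩
          have : t = s := by
            ext
            · simp at hxy; simp [hxy]
            · simp at hc; simp [hc]
          simp [this]
    have hY' : mk Y = mk (invRev (s :: G) ++ (X ++ s :: G)) := by
      rw [← mul_mk, ← inv_mk, ← mul_mk, h, inv_mul_cancel_left]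
    have := reduce.sound hY'
    rw [hY.1.reduce_eq, hred.reduce_eq] at this
    obtain ⟨G0, t, hG0⟩ : ∃ G0 t, s :: G = G0 ++ [t] := by
      rcases List.eq_nil_or_concat (s :: G) with h | ⟨X', t, h⟩
      · simp at h
      · exact ⟨X', t, by simpa using h⟩
    rw [hG0] at this
    have h2 := hY.2 t (by rw [this]; simp [← List.append_assoc]) (t.1, !t.2)
      (by rw [this]; simp [invRev]) rfl
    simp at h2

open FreeGroup in
theorem aux_mem {x : FreeGroup (Fin 3)}
    (h : x ∈ Subgroup.closure ({FreeGroup.of 1, FreeGroup.of 2} : Set (FreeGroup (Fin 3)))) :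
    ∀ p ∈ x.toWord, p.1 ≠ 0 := by
  induction h using Subgroup.closure_induction with
  | mem x hx =>
    rcases hx with rfl | rfl <;> simp
  | one => simp
  | mul x y _ _ hx hy =>
    intro p hp
    have := (toWord_mul_sublist x y).subset hp
    rcases List.mem_append.1 this with h | h
    · exact hx p h
    · exact hy p h
  | inv x _ hx =>
    intro p hp
    rw [toWord_inv] at hp
    simp only [invRev, List.mem_reverse, List.mem_map] at hp
    obtain ⟨r, hr, rfl⟩ := hp
    exact hx r hr

open FreeGroup in
theorem aux_comm {α : Type*} [DecidableEq α] {w : FreeGroup α} {a : α}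
    (h : of a * w = w * of a) : ∀ p ∈ w.toWord.head?, p.1 = a := by
  intro p hp
  by_contra hpa
  have hred : IsReduced ((a, true) :: w.toWord) := by
    have := isReduced_toWord (x := w)
    unfold FreeGroup.IsReduced at *
    rw [List.isChain_cons]
    refine ⟨?_, this⟩
    intro y hy hay
    rw [Option.mem_def] at hp hy
    rw [hp] at hy
    simp at hy
    subst hy
    exact absurd hay.symm hpa
  have e1 : (of a * w).toWord = (a, true) :: w.toWord := by
    rw [toWord_mul, toWord_of]
    exact hred.reduce_eq
  have e2 := toWord_mul_sublist w (of a)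
  rw [← h, e1, toWord_of] at e2
  have e3 := e2.eq_of_length (by simp)
  cases hw : w.toWord with
  | nil => simp [hw] at hp
  | cons t L =>
    simp [hw] at hp e3
    subst hp
    apply hpa
    rw [← e3.1]

open FreeGroup in
theorem aux_red {X1 X2 X3 : List (Fin 3 × Bool)} (r1 : IsReduced X1) (r2 : IsReduced X2)
    (r3 : IsReduced X3) (h1 : ∀ p ∈ X1, p.1 ≠ 0) (h2 : ∀ p ∈ X2, p.1 ≠ 0)
    (h3 : ∀ p ∈ X3, p.1 ≠ 0) :
    IsCyclicallyReduced ((0, true) :: (X1 ++ (0, true) :: (X2 ++ (0, true) :: X3))) := by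
  have key : ∀ X Z : List (Fin 3 × Bool), IsReduced X → (∀ p ∈ X, p.1 ≠ 0) →
      (Z = [] ∨ IsReduced Z ∧ (0, true) ∈ Z.head?) → IsReduced ((0, true) :: (X ++ Z)) := by
    intro X Z hX hX0 hZ
    unfold FreeGroup.IsReduced at *
    rw [List.isChain_cons, List.isChain_append]
    rcases hZ with rfl | ⟨hZ, hZ0⟩
    · refine ⟨?_, hX, by simp, by simp⟩
      intro y hy hy0
      exact absurd hy0.symm (hX0 y (by simpa using List.mem_of_mem_head? hy))
    · rw [Option.mem_def] at hZ0
      refine ⟨?_, hX, hZ, ?_⟩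
      · intro y hy hy0
        cases X with
        | nil => simp [hZ0] at hy; simp [← hy]
        | cons t X =>
          simp at hy
          subst hy
          exact absurd hy0.symm (hX0 t (by simp))
      · intro x hx y hy hxy
        rw [Option.mem_def, hZ0] at hy
        simp at hy
        subst hy
        exact absurd hxy (hX0 x (List.mem_of_mem_getLast? hx))
  have k3 := key X3 [] r3 h3 (Or.inl rfl)
  rw [List.append_nil] at k3
  have k2 := key X2 _ r2 h2 (Or.inr ⟨k3, by simp⟩)
  have k1 := key X1 _ r1 h1 (Or.inr ⟨k2, by simp⟩)
  refine ⟨k1, ?_⟩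
  intro a ha b hb hab
  simp at hb
  subst hb
  simp at hab
  have : a = (0, true) := by
    have := List.mem_of_mem_getLast? ha
    simp at this
    rcases this with h | h | h | h | h | h
    · exact h
    · exact absurd hab (h1 a h)
    · exact h
    · exact absurd hab (h2 a h)
    · exact h
    · exact absurd hab (h3 a h)
  simp [this]

theorem aux_rot {X1 X2 X3 : List (Fin 3 × Bool)} (h1 : ∀ p ∈ X1, p.1 ≠ 0)
    (h2 : ∀ p ∈ X2, p.1 ≠ 0) (h3 : ∀ p ∈ X3, p.1 ≠ 0)
    (h : ((0, true) :: (X1 ++ (0, true) :: (X2 ++ (0, true) :: X3))) ~r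
      [(0, true), (1, true), (0, true), (2, true), (0, true)]) :
    (X1 = [(1, true)] ∧ X2 = [(2, true)] ∧ X3 = []) ∨
    (X1 = [(2, true)] ∧ X2 = [] ∧ X3 = [(1, true)]) ∨
    (X1 = [] ∧ X2 = [(1, true)] ∧ X3 = [(2, true)]) := by
  have hm := List.mem_cyclicPermutations_iff.2 h
  have hc : List.cyclicPermutations
      ([(0, true), (1, true), (0, true), (2, true), (0, true)] : List (Fin 3 × Bool)) =
      [[(0, true), (1, true), (0, true), (2, true), (0, true)],
       [(1, true), (0, true), (2, true), (0, true), (0, true)],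
       [(0, true), (2, true), (0, true), (0, true), (1, true)],
       [(2, true), (0, true), (0, true), (1, true), (0, true)],
       [(0, true), (0, true), (1, true), (0, true), (2, true)]] := by decide
  rw [hc] at hm
  rcases X1 with _ | ⟨x, _ | ⟨y, X1⟩⟩ <;> rcases X2 with _ | ⟨z, _ | ⟨u, X2⟩⟩ <;>
    simp_all <;> grind


/-- Let `F₃` be free on `q, a, b` (`q = of 0`, `a = of 1`, `b = of 2`) and let
`w₁, w₂ ∈ ⟨a, b⟩`. If `(w₁ q w₂) a (w₁ q w₂) b (w₁ q w₂)` is conjugate in `F₃` to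
`q a q b q`, then `w₁ = 1` and `w₂ = 1`. -/
theorem conj_qaqbq_forces_trivial (w₁ w₂ : FreeGroup (Fin 3))
    (h₁ : w₁ ∈ Subgroup.closure ({FreeGroup.of 1, FreeGroup.of 2} : Set (FreeGroup (Fin 3))))
    (h₂ : w₂ ∈ Subgroup.closure ({FreeGroup.of 1, FreeGroup.of 2} : Set (FreeGroup (Fin 3))))
    (h : IsConj
      ((w₁ * FreeGroup.of 0 * w₂) * FreeGroup.of 1 * (w₁ * FreeGroup.of 0 * w₂) *
        FreeGroup.of 2 * (w₁ * FreeGroup.of 0 * w₂))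
      (FreeGroup.of 0 * FreeGroup.of 1 * FreeGroup.of 0 * FreeGroup.of 2 * FreeGroup.of 0)) :
    w₁ = 1 ∧ w₂ = 1 := by

  classical
  set S := Subgroup.closure ({FreeGroup.of 1, FreeGroup.of 2} : Set (FreeGroup (Fin 3))) with hS
  have ha : (FreeGroup.of 1 : FreeGroup (Fin 3)) ∈ S := Subgroup.subset_closure (by simp)
  have hb : (FreeGroup.of 2 : FreeGroup (Fin 3)) ∈ S := Subgroup.subset_closure (by simp)
  set x1 := w₂ * FreeGroup.of 1 * w₁ with hx1
  set x2 := w₂ * FreeGroup.of 2 * w₁ with hx2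
  set x3 := w₂ * w₁ with hx3
  have m1 := aux_mem (S.mul_mem (S.mul_mem h₂ ha) h₁)
  have m2 := aux_mem (S.mul_mem (S.mul_mem h₂ hb) h₁)
  have m3 := aux_mem (S.mul_mem h₂ h₁)
  have hcr := aux_red FreeGroup.isReduced_toWord FreeGroup.isReduced_toWord
    FreeGroup.isReduced_toWord m1 m2 m3
  have hcr' := aux_red (X1 := [(1, true)]) (X2 := [(2, true)]) (X3 := [])
    (by simp) (by simp) (by simp) (by simp) (by simp) (by simp)
  obtain ⟨c, hc⟩ := isConj_iff.1 h
  have hW : FreeGroup.mk ((0, true) :: (x1.toWord ++ (0, true) :: (x2.toWord ++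
      (0, true) :: x3.toWord))) =
      FreeGroup.of 0 * x1 * FreeGroup.of 0 * x2 * FreeGroup.of 0 * x3 := by
    have e : ∀ L : List (Fin 3 × Bool), FreeGroup.mk ((0, true) :: L) =
        FreeGroup.of 0 * FreeGroup.mk L := by
      intro L; simp [FreeGroup.of, FreeGroup.mul_mk]
    simp only [e, ← FreeGroup.mul_mk, FreeGroup.mk_toWord, mul_assoc]
  have hY : FreeGroup.mk ((0, true) :: ([(1, true)] ++ (0, true) :: ([(2, true)] ++
      (0, true) :: []))) = (FreeGroup.of 0 * FreeGroup.of 1 * FreeGroup.of 0 *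
        FreeGroup.of 2 * FreeGroup.of 0 : FreeGroup (Fin 3)) := by
    simp [FreeGroup.of, FreeGroup.mul_mk]
  have hrot := aux_conj (w₁⁻¹ * c⁻¹).toWord _ _ FreeGroup.isReduced_toWord hcr hcr' (by
    rw [hW, hY, FreeGroup.mk_toWord, ← hc, hx1, hx2, hx3]
    group)
  have back : ∀ {x y : FreeGroup (Fin 3)}, x.toWord = y.toWord → x = y :=
    fun h => FreeGroup.toWord_injective h
  have hab : ∀ {x y : FreeGroup (Fin 3)} (f : Fin 3 → Multiplicative ℤ), x = y →
    FreeGroup.lift f x = FreeGroup.lift f y := fun f h => by rw [h]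
  rcases aux_rot m1 m2 m3 hrot with ⟨e1, e2, e3⟩ | ⟨e1, e2, e3⟩ | ⟨e1, e2, e3⟩
  · have e1 : x1 = FreeGroup.of 1 := back (by rw [FreeGroup.toWord_of]; exact e1)
    have e2 : x2 = FreeGroup.of 2 := back (by rw [FreeGroup.toWord_of]; exact e2)
    have e3 : w₂ * w₁ = 1 := FreeGroup.toWord_eq_nil_iff.1 e3
    have e4 : w₁ = w₂⁻¹ := eq_inv_of_mul_eq_one_right e3
    have c1 := aux_comm (w := w₂) (a := 1) (by
      rw [← e1, hx1, e4]; rw [hx1, e4] at e1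
      calc _ = w₂ * FreeGroup.of 1 := by group
        _ = _ := by rw [e1])
    have c2 := aux_comm (w := w₂) (a := 2) (by
      rw [← e2, hx2, e4]; rw [hx2, e4] at e2
      calc _ = w₂ * FreeGroup.of 2 := by group
        _ = _ := by rw [e2])
    have : w₂ = 1 := by
      rw [← FreeGroup.toWord_eq_nil_iff]
      cases hw : w₂.toWord with
      | nil => rfl
      | cons t L =>
        have d1 := c1 t (by simp [hw])
        have d2 := c2 t (by simp [hw])
        rw [d1] at d2
        exact absurd d2 (by decide)
    refine ⟨?_, this⟩
    rw [e4, this, inv_one]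
  · exfalso
    have e1 : w₂ * FreeGroup.of 1 * w₁ = FreeGroup.of 2 :=
      back (by rw [FreeGroup.toWord_of]; exact e1)
    have e3 : w₂ * w₁ = FreeGroup.of 1 := back (by rw [FreeGroup.toWord_of]; exact e3)
    have f1 := congrArg Multiplicative.toAdd (hab (fun _ => Multiplicative.ofAdd 1) e1)
    have f3 := congrArg Multiplicative.toAdd (hab (fun _ => Multiplicative.ofAdd 1) e3)
    simp at f1 f3
    omega
  · exfalso
    have e1 : w₂ * FreeGroup.of 1 * w₁ = 1 := FreeGroup.toWord_eq_nil_iff.1 e1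
    have e3 : w₂ * w₁ = FreeGroup.of 2 := back (by rw [FreeGroup.toWord_of]; exact e3)
    have f1 := congrArg Multiplicative.toAdd (hab (fun _ => Multiplicative.ofAdd 1) e1)
    have f3 := congrArg Multiplicative.toAdd (hab (fun _ => Multiplicative.ofAdd 1) e3)
    simp at f1 f3
    omega
end

section
/- Let F be the free group on a finite generating set S, let R be a finite subset of F, and let N be the normal closure of R in F. Then the subgroup A = { (x, y) ∈ F × F | x⁻¹ * y ∈ N } of F × F (the fibre product over the quotient F/N) is generated by the finite set { (1, r) | r ∈ R } ∪ { (s, s) | s ∈ S }. -/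
/-- Mihailova subgroup generation: for the free group `F` on a finite set `S` and a finite
set `R ⊆ F` with normal closure `N`, the fibre product
`A = {(x, y) ∈ F × F | x⁻¹ y ∈ N}` is generated by
`{(1, r) | r ∈ R} ∪ {(of s, of s) | s ∈ S}`. -/
theorem mihailova_subgroup_generated {S : Type*} [Finite S] (R : Finset (FreeGroup S)) :
    ∀ x y : FreeGroup S,
      (x, y) ∈
          Subgroup.closure
            ((fun r => ((1 : FreeGroup S), r)) '' (R : Set (FreeGroup S)) ∪
              Set.range fun s => (FreeGroup.of s, FreeGroup.of s)) ↔
        x⁻¹ * y ∈ Subgroup.normalClosure (R : Set (FreeGroup S)) := by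
  intro x y
  set N := Subgroup.normalClosure (R : Set (FreeGroup S)) with hN
  set C := Subgroup.closure
            ((fun r => ((1 : FreeGroup S), r)) '' (R : Set (FreeGroup S)) ∪
              Set.range fun s => (FreeGroup.of s, FreeGroup.of s)) with hC
  constructor
  · intro h
    have hle : C ≤ MonoidHom.eqLocus
        ((QuotientGroup.mk' N).comp (MonoidHom.fst (FreeGroup S) (FreeGroup S)))
        ((QuotientGroup.mk' N).comp (MonoidHom.snd (FreeGroup S) (FreeGroup S))) := by
      rw [hC, Subgroup.closure_le]
      rintro _ (⟨r, hr, rfl⟩ | ⟨s, rfl⟩)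
      · change ((1 : FreeGroup S) : FreeGroup S ⧸ N) = (r : FreeGroup S ⧸ N)
        rw [QuotientGroup.eq]
        simpa using Subgroup.subset_normalClosure hr
      · rfl
    have h2 : (x : FreeGroup S ⧸ N) = (y : FreeGroup S ⧸ N) := hle h
    exact QuotientGroup.eq.mp h2
  · intro h
    have hdiag : ∀ g : FreeGroup S, (g, g) ∈ C := by
      intro g
      induction g using FreeGroup.induction_on with
      | C1 => exact C.one_mem
      | of s => exact Subgroup.subset_closure (Or.inr ⟨s, rfl⟩)
      | inv_of s hs => exact C.inv_mem hs
      | mul a b ha hb => exact C.mul_mem ha hb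
    have hnormal : (C.comap (MonoidHom.inr (FreeGroup S) (FreeGroup S))).Normal := by
      constructor
      intro n hn g
      have hn' : ((1 : FreeGroup S), n) ∈ C := hn
      change ((1 : FreeGroup S), g * n * g⁻¹) ∈ C
      have := C.mul_mem (C.mul_mem (hdiag g) hn') (C.inv_mem (hdiag g))
      simpa using this
    have hle : N ≤ C.comap (MonoidHom.inr (FreeGroup S) (FreeGroup S)) := by
      apply Subgroup.normalClosure_le_normal
      intro r hr
      exact Subgroup.subset_closure (Or.inl ⟨r, hr, rfl⟩)
    have h1 : ((1 : FreeGroup S), x⁻¹ * y) ∈ C := hle h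
    simpa using C.mul_mem (hdiag x) h1
end
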